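/- arXiv:2308.11263 — 8 statements merged into one kernel-verified Lean document; each statement's English description precedes it below -/
import Mathlib

section
/- Let W be a symmetric n×n real matrix (W_{ij} = W_{ji}), let g_n : ℝ → ℝ be odd, let g_l : ℝ → ℝ be arbitrary, let h_i : ℝ → ℝ be differentiable, let a ∈ ℝⁿ with a_i ∈ {−1,+1}, let η > 0, and let b ∈ ℝ. Suppose z : [0,∞) → ℝⁿ is differentiable and satisfies, for every t ≥ 0 and every i, ż_i(t) = η a_i ∑_{j=1}^n W_{ij} · g_n( g_l(a_j h_j'(z_j(t))) − g_l(a_i h_i'(z_i(t))) ), and suppose ∑_{i=1}^n a_i z_i(0) = b. Then ∑_{i=1}^n a_i z_i(t) = b for all t ≥ 0 (all-time resource-demand feasibility). -/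
/-!
Along a solution, the derivative of `∑ i, a i * z i` is `η ∑ i, ∑ j, W i j * gn (u j - u i)`
with `u i = gl (a i * (h i)' (z i))`, because `a i ^ 2 = 1`. The summand is antisymmetric in
`(i, j)`, as `W` is symmetric and `gn` is odd, so the double sum vanishes
(`sum_sum_eq_zero_of_antisymm`) and the weighted sum is constant on `[0, ∞)`.
-/

lemma sum_sum_eq_zero_of_antisymm {n : ℕ} (F : Fin n → Fin n → ℝ)
    (hF : ∀ i j, F i j = -F j i) : ∑ i, ∑ j, F i j = 0 := by
  have key : ∑ i, ∑ j, F i j = -∑ i, ∑ j, F i j := by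
    conv_lhs => rw [Finset.sum_comm]
    simp only [← Finset.sum_neg_distrib]
    exact Finset.sum_congr rfl fun i _ => Finset.sum_congr rfl fun j _ => hF j i
  linarith

/-- All-time resource-demand feasibility of the continuous-time nonlinear
Laplacian-gradient dynamics: if `z` solves
`ż_i(t) = η a_i ∑ j, W i j * g_n (g_l (a_j (h_j)'(z_j)) − g_l (a_i (h_i)'(z_i)))`
for all `t ≥ 0`, `W` is symmetric, `g_n` is odd, `a_i ∈ {−1,+1}`, and the initialization
is feasible (`∑ i, a i * z i 0 = b`), then `∑ i, a i * z i t = b` for all `t ≥ 0`. -/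
theorem statement2 (n : ℕ) (W : Matrix (Fin n) (Fin n) ℝ)
    (hW : ∀ i j, W i j = W j i)
    (gn gl : ℝ → ℝ) (hgn_odd : ∀ x, gn (-x) = -gn x)
    (h : Fin n → ℝ → ℝ) (hdiff : ∀ i, Differentiable ℝ (h i))
    (a : Fin n → ℝ) (ha : ∀ i, a i = 1 ∨ a i = -1)
    (η : ℝ) (hη : 0 < η) (b : ℝ)
    (z : ℝ → Fin n → ℝ)
    (hz : ∀ t : ℝ, 0 ≤ t → ∀ i, HasDerivAt (fun s => z s i)
      (η * a i * ∑ j, W i j *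
        gn (gl (a j * deriv (h j) (z t j)) - gl (a i * deriv (h i) (z t i)))) t)
    (hinit : ∑ i, a i * z 0 i = b) :
    ∀ t : ℝ, 0 ≤ t → ∑ i, a i * z t i = b := by
  have hderiv : ∀ t : ℝ, 0 ≤ t → HasDerivAt (fun s => ∑ i, a i * z s i) 0 t := by
    intro t ht
    have hsum := HasDerivAt.fun_sum (u := Finset.univ)
      fun i _ => (hz t ht i).const_mul (a i)
    refine hsum.congr_deriv (Eq.symm ?_)
    set u : Fin n → ℝ := fun i => gl (a i * deriv (h i) (z t i))
    have hzero := sum_sum_eq_zero_of_antisymm (fun i j => W i j * gn (u j - u i)) (by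
      intro i j
      rw [hW i j, ← neg_sub (u i) (u j), hgn_odd]
      ring)
    have hsq : ∀ i, a i * a i = 1 := by
      intro i
      rcases ha i with hi | hi <;> rw [hi] <;> norm_num
    calc (0 : ℝ) = η * ∑ i, ∑ j, W i j * gn (u j - u i) := by rw [hzero, mul_zero]
      _ = ∑ i, a i * (η * a i * ∑ j, W i j * gn (u j - u i)) := by
        rw [Finset.mul_sum]
        refine Finset.sum_congr rfl fun i _ => ?_
        linear_combination (-(η * ∑ j, W i j * gn (u j - u i))) * hsq i
  intro t ht
  rw [← hinit]
  exact constant_of_has_deriv_right_zero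
    (fun s hs => (hderiv s hs.1).continuousAt.continuousWithinAt)
    (fun s hs => (hderiv s hs.1).hasDerivWithinAt) t ⟨ht, le_rfl⟩
end

section
/- Let W be a symmetric n×n real matrix with nonnegative entries (W_{ij} = W_{ji} ≥ 0), let a ∈ ℝⁿ with a_i ∈ {−1,+1}, let η > 0, let g_l : ℝ → ℝ be odd and monotone nondecreasing, let g_n : ℝ → ℝ be odd and sign-preserving (x·g_n(x) ≥ 0 for all x), and let h_i : ℝ → ℝ be differentiable. Then for every z ∈ ℝⁿ, ∑_{i=1}^n h_i'(z_i) · η a_i ∑_{j=1}^n W_{ij} · g_n( g_l(a_j h_j'(z_j)) − g_l(a_i h_i'(z_i)) ) ≤ 0. That is, the time derivative of the cost H(z) = ∑_i h_i(z_i) along the Laplacian-gradient dynamics ż_i = η a_i ∑_j W_{ij} g_n(g_l(a_j ∂_{z_j} h_j) − g_l(a_i ∂_{z_i} h_i)) is nonpositive. -/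
/-!
Put `u i = a i * (h i)'(z i)`. The derivative is `η * S` with
`S = ∑ i j, u i * W i j * gn (gl (u j) - gl (u i))`. Since `W` is symmetric and `gn` is odd,
exchanging `i` and `j` gives `2 * S = -∑ i j, W i j * ((u j - u i) * gn (gl (u j) - gl (u i)))`,
and every summand is nonnegative because `gn (gl y - gl x)` is zero or has
the sign of `y - x`
(`sub_mul_gn_nonneg`).
-/

/-- Where `gl` is flat between `x` and `y` the product vanishes since oddness forces `gn 0 = 0`;
otherwise monotonicity makes `gl y - gl x` and `y - x` agree in sign. -/
lemma sub_mul_gn_nonneg {gl gn : ℝ → ℝ} (hgl_mono : Monotone gl)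
    (hgn_odd : ∀ x, gn (-x) = -gn x) (hgn_sign : ∀ x, 0 ≤ x * gn x) (x y : ℝ) :
    0 ≤ (y - x) * gn (gl y - gl x) := by
  have h0 : gn 0 = 0 := by
    have := hgn_odd 0
    rw [neg_zero] at this
    linarith
  have hs := hgn_sign (gl y - gl x)
  rcases lt_trichotomy (gl x) (gl y) with hlt | heq | hgt
  · have hxy := hgl_mono.reflect_lt hlt
    exact mul_nonneg (by linarith) (nonneg_of_mul_nonneg_right hs (by linarith))
  · simp [heq, h0]
  · have hyx := hgl_mono.reflect_lt hgt
    exact mul_nonneg_of_nonpos_of_nonpos (by linarith)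
      (nonpos_of_mul_nonneg_right hs (by linarith))

/-- The time derivative of the cost `H(z) = ∑ i, h i (z i)` along the
nonlinear Laplacian-gradient dynamics is nonpositive: for symmetric nonnegative `W`,
`a i ∈ {−1,+1}`, `η > 0`, `g_l` odd nondecreasing and `g_n` odd sign-preserving,
`∑ i, (h i)'(z i) * η a_i ∑ j, W i j * g_n (g_l (a_j (h j)'(z j)) − g_l (a_i (h i)'(z i))) ≤ 0`. -/
theorem statement5 (n : ℕ) (W : Matrix (Fin n) (Fin n) ℝ)
    (hW_symm : ∀ i j, W i j = W j i) (hW_nonneg : ∀ i j, 0 ≤ W i j)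
    (a : Fin n → ℝ) (ha : ∀ i, a i = 1 ∨ a i = -1)
    (η : ℝ) (hη : 0 < η)
    (gl gn : ℝ → ℝ)
    (hgl_odd : ∀ x, gl (-x) = -gl x) (hgl_mono : Monotone gl)
    (hgn_odd : ∀ x, gn (-x) = -gn x) (hgn_sign : ∀ x, 0 ≤ x * gn x)
    (h : Fin n → ℝ → ℝ) (hdiff : ∀ i, Differentiable ℝ (h i))
    (z : Fin n → ℝ) :
    ∑ i, deriv (h i) (z i) * (η * a i * ∑ j, W i j *
      gn (gl (a j * deriv (h j) (z j)) - gl (a i * deriv (h i) (z i)))) ≤ 0 := by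
  set u : Fin n → ℝ := fun i => a i * deriv (h i) (z i) with hu
  set S : ℝ := ∑ i, ∑ j, u i * (W i j * gn (gl (u j) - gl (u i))) with hS
  have hfactor : ∑ i, deriv (h i) (z i) * (η * a i * ∑ j, W i j *
      gn (gl (a j * deriv (h j) (z j)) - gl (a i * deriv (h i) (z i)))) = η * S := by
    rw [hS, Finset.mul_sum]
    refine Finset.sum_congr rfl fun i _ => ?_
    rw [← Finset.mul_sum]
    simp only [hu]
    ring
  have hswap : S = ∑ i, ∑ j, -(u j * (W i j * gn (gl (u j) - gl (u i)))) := by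
    rw [hS, Finset.sum_comm]
    refine Finset.sum_congr rfl fun i _ => Finset.sum_congr rfl fun j _ => ?_
    rw [hW_symm j i, ← neg_sub (gl (u j)) (gl (u i)), hgn_odd]
    ring
  have hdouble : S + S = ∑ i, ∑ j, -(W i j * ((u j - u i) * gn (gl (u j) - gl (u i)))) := by
    nth_rewrite 2 [hswap]
    rw [hS, ← Finset.sum_add_distrib]
    refine Finset.sum_congr rfl fun i _ => ?_
    rw [← Finset.sum_add_distrib]
    exact Finset.sum_congr rfl fun j _ => by ring
  have hneg : S + S ≤ 0 := by
    rw [hdouble]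
    exact Finset.sum_nonpos fun i _ => Finset.sum_nonpos fun j _ =>
      neg_nonpos.mpr (mul_nonneg (hW_nonneg i j)
        (sub_mul_gn_nonneg hgl_mono hgn_odd hgn_sign (u i) (u j)))
  rw [hfactor]
  exact mul_nonpos_of_nonneg_of_nonpos hη.le (by linarith)
end

section
/- Let W be a symmetric n×n real matrix with nonnegative entries, a ∈ ℝⁿ with a_i ∈ {−1,+1}, η > 0, g_l : ℝ → ℝ odd and monotone nondecreasing, g_n : ℝ → ℝ odd and sign-preserving (x·g_n(x) ≥ 0), and h_i : ℝ → ℝ continuously differentiable. If z : [0,∞) → ℝⁿ is differentiable and satisfies ż_i(t) = η a_i ∑_{j=1}^n W_{ij} · g_n( g_l(a_j h_j'(z_j(t))) − g_l(a_i h_i'(z_i(t))) ) for all t ≥ 0 and all i, then the function t ↦ H(z(t)) = ∑_{i=1}^n h_i(z_i(t)) is monotone nonincreasing on [0,∞). -/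
/-!
Write `u i = a i * (h i)'(z i)`. By the chain rule, `d/dt H(z(t)) = η * S` with
`S = ∑ i, ∑ j, W i j * u i * gn (gl (u j) - gl (u i))`. Exchanging `i` and `j`, and using that `W`
is symmetric and `gn` is odd, gives
`2 * S = ∑ i, ∑ j, W i j * (u i - u j) * gn (gl (u j) - gl (u i))`.
Every term is nonpositive (`sub_mul_gn_nonpos`), because `gn` preserves signs and `gl` is monotone.
So the derivative of the cost is nonpositive on `[0, ∞)` and the cost is antitone there.
-/

/-- If `gl` identifies `x` and `y`, only `gn 0 = 0` is available, which is where oddness of `gn`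
enters; otherwise `gl y - gl x` has the strict sign of `y - x`. -/
lemma sub_mul_gn_nonpos {gl gn : ℝ → ℝ} (hgl_mono : Monotone gl)
    (hgn_odd : ∀ x, gn (-x) = -gn x) (hgn_sign : ∀ x, 0 ≤ x * gn x) (x y : ℝ) :
    (x - y) * gn (gl y - gl x) ≤ 0 := by
  have gn_zero : gn 0 = 0 := by
    have := hgn_odd 0
    rw [neg_zero] at this
    linarith
  have hs := hgn_sign (gl y - gl x)
  rcases lt_trichotomy (gl y - gl x) 0 with hlt | heq | hgt
  · have hyx : y < x := hgl_mono.reflect_lt (by linarith)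
    have hgn : gn (gl y - gl x) ≤ 0 := nonpos_of_mul_nonneg_right hs hlt
    exact mul_nonpos_of_nonneg_of_nonpos (by linarith) hgn
  · rw [heq, gn_zero, mul_zero]
  · have hxy : x < y := hgl_mono.reflect_lt (by linarith)
    have hgn : 0 ≤ gn (gl y - gl x) := nonneg_of_mul_nonneg_right hs hgt
    exact mul_nonpos_of_nonpos_of_nonneg (by linarith) hgn

/-- Nonpositivity of the nonlinear Laplacian form, by symmetrizing the double sum. -/
lemma laplacian_form_nonpos {n : ℕ} {W : Matrix (Fin n) (Fin n) ℝ}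
    (hW_symm : ∀ i j, W i j = W j i) (hW_nonneg : ∀ i j, 0 ≤ W i j) {gl gn : ℝ → ℝ}
    (hgl_mono : Monotone gl) (hgn_odd : ∀ x, gn (-x) = -gn x)
    (hgn_sign : ∀ x, 0 ≤ x * gn x) (u : Fin n → ℝ) :
    ∑ i, ∑ j, W i j * (u i * gn (gl (u j) - gl (u i))) ≤ 0 := by
  have swap : ∑ i, ∑ j, W i j * (u i * gn (gl (u j) - gl (u i)))
      = ∑ i, ∑ j, W i j * (-u j * gn (gl (u j) - gl (u i))) := by
    rw [Finset.sum_comm]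
    refine Finset.sum_congr rfl fun i _ => Finset.sum_congr rfl fun j _ => ?_
    rw [hW_symm j i, ← neg_sub (gl (u j)) (gl (u i)), hgn_odd]
    ring
  have two : ∑ i, ∑ j, W i j * (u i * gn (gl (u j) - gl (u i)))
      + ∑ i, ∑ j, W i j * (-u j * gn (gl (u j) - gl (u i)))
      = ∑ i, ∑ j, W i j * ((u i - u j) * gn (gl (u j) - gl (u i))) := by
    simp only [← Finset.sum_add_distrib]
    refine Finset.sum_congr rfl fun i _ => Finset.sum_congr rfl fun j _ => ?_
    ring
  have nonpos : ∑ i, ∑ j, W i j * ((u i - u j) * gn (gl (u j) - gl (u i))) ≤ 0 :=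
    Finset.sum_nonpos fun i _ => Finset.sum_nonpos fun j _ =>
      mul_nonpos_of_nonneg_of_nonpos (hW_nonneg i j)
        (sub_mul_gn_nonpos hgl_mono hgn_odd hgn_sign _ _)
  linarith

/-- Along the continuous-time nonlinear Laplacian-gradient dynamics
`ż_i(t) = η a_i ∑ j, W i j * g_n (g_l (a_j (h j)'(z_j(t))) − g_l (a_i (h i)'(z_i(t))))`
with symmetric nonnegative `W`, `a i ∈ {−1,+1}`, `η > 0`, `g_l` odd nondecreasing,
`g_n` odd sign-preserving, and `h i` continuously differentiable, the cost
`t ↦ H(z(t)) = ∑ i, h i (z i t)` is monotone nonincreasing on `[0, ∞)`. -/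
theorem statement6 (n : ℕ) (W : Matrix (Fin n) (Fin n) ℝ)
    (hW_symm : ∀ i j, W i j = W j i) (hW_nonneg : ∀ i j, 0 ≤ W i j)
    (a : Fin n → ℝ) (ha : ∀ i, a i = 1 ∨ a i = -1)
    (η : ℝ) (hη : 0 < η)
    (gl gn : ℝ → ℝ)
    (hgl_odd : ∀ x, gl (-x) = -gl x) (hgl_mono : Monotone gl)
    (hgn_odd : ∀ x, gn (-x) = -gn x) (hgn_sign : ∀ x, 0 ≤ x * gn x)
    (h : Fin n → ℝ → ℝ) (hsmooth : ∀ i, ContDiff ℝ 1 (h i))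
    (z : ℝ → Fin n → ℝ)
    (hz : ∀ t : ℝ, 0 ≤ t → ∀ i, HasDerivAt (fun s => z s i)
      (η * a i * ∑ j, W i j *
        gn (gl (a j * deriv (h j) (z t j)) - gl (a i * deriv (h i) (z t i)))) t) :
    AntitoneOn (fun t => ∑ i, h i (z t i)) (Set.Ici (0 : ℝ)) := by
  have hderiv : ∀ t : ℝ, 0 ≤ t → HasDerivAt (fun t => ∑ i, h i (z t i))
      (∑ i, deriv (h i) (z t i) * (η * a i * ∑ j, W i j *
        gn (gl (a j * deriv (h j) (z t j)) - gl (a i * deriv (h i) (z t i))))) t := by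
    intro t ht
    refine HasDerivAt.fun_sum fun i _ => ?_
    have hi : HasDerivAt (h i) (deriv (h i) (z t i)) (z t i) :=
      ((hsmooth i).differentiable one_ne_zero _).hasDerivAt
    exact hi.comp t (hz t ht i)
  refine antitoneOn_of_hasDerivWithinAt_nonpos (convex_Ici 0)
    (fun t ht => (hderiv t ht).continuousAt.continuousWithinAt)
    (fun t ht => (hderiv t (interior_subset ht)).hasDerivWithinAt) fun t _ => ?_
  have form := laplacian_form_nonpos hW_symm hW_nonneg hgl_mono hgn_odd hgn_sign
    (fun i => a i * deriv (h i) (z t i))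
  refine le_of_eq_of_le ?_ (mul_nonpos_of_nonneg_of_nonpos hη.le form)
  simp only [Finset.mul_sum]
  refine Finset.sum_congr rfl fun i _ => Finset.sum_congr rfl fun j _ => ?_
  ring
end

section
/- Let W be a symmetric nonnegative n×n weight matrix of a connected undirected graph, D = diag(∑_j W_{ij}), L = D − W, with λ_2 the smallest nonzero eigenvalue of L and λ_n its largest eigenvalue. Let g : ℝ → ℝ satisfy the incremental sector bounds κ (x − y)² ≤ ( g(x) − g(y) )( x − y ) ≤ 𝒦 (x − y)² for all x, y ∈ ℝ, where 0 < κ ≤ 𝒦. Then for every z ∈ ℝⁿ, writing z̄ = z − (𝟏ₙᵀz/n)𝟏ₙ, one has λ_2 κ ‖z̄‖₂² ≤ g(z)ᵀ L z ≤ λ_n 𝒦 ‖z̄‖₂², where g(z) = (g(z_1),…,g(z_n)). -/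
/-!
The quadratic form of the Laplacian is a sum over edges,
`v ⬝ᵥ L z = ½ ∑ᵢ ∑ⱼ Wᵢⱼ (vᵢ - vⱼ) (zᵢ - zⱼ)` (`laplacian_bilin`). With `v = g(z)`, the sector bounds
applied edge by edge give `κ zᵀLz ≤ g(z)ᵀLz ≤ 𝒦 zᵀLz`, and `zᵀLz = z̄ᵀLz̄` since only differences of
coordinates occur. It remains to bound `z̄ᵀLz̄` by the extreme eigenvalues: expanding `z̄` in an
orthonormal eigenbasis of `L` (`exists_spectral_expansion`), the eigenvectors with eigenvalue zero
are constant, hence orthogonal to `z̄`, so only eigenvalues in `[λ₂, λₙ]` contribute.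
-/

open Matrix

theorem laplacian_bilin {n : ℕ} (W : Matrix (Fin n) (Fin n) ℝ)
    (hW : ∀ i j, W i j = W j i) (v z : Fin n → ℝ) :
    v ⬝ᵥ ((Matrix.diagonal (fun i => ∑ j, W i j) - W) *ᵥ z)
      = (1 / 2) * ∑ i, ∑ j, W i j * ((v i - v j) * (z i - z j)) := by
  have h1 : v ⬝ᵥ ((Matrix.diagonal (fun i => ∑ j, W i j) - W) *ᵥ z)
      = ∑ i, ∑ j, W i j * (v i * (z i - z j)) := by
    simp only [dotProduct, Matrix.sub_mulVec, Pi.sub_apply, Matrix.mulVec_diagonal]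
    refine Finset.sum_congr rfl fun i _ => ?_
    simp only [Matrix.mulVec, dotProduct, Finset.sum_mul, ← Finset.sum_sub_distrib,
      Finset.mul_sum]
    exact Finset.sum_congr rfl fun j _ => by ring
  -- Exchanging the roles of `i` and `j` and averaging symmetrizes the sum.
  have h2 : ∑ i, ∑ j, W i j * (v i * (z i - z j))
      = ∑ i, ∑ j, W i j * (v j * (z j - z i)) := by
    rw [Finset.sum_comm]
    refine Finset.sum_congr rfl fun i _ => Finset.sum_congr rfl fun j _ => ?_
    rw [hW]
  have h3 : ∑ i, ∑ j, W i j * ((v i - v j) * (z i - z j))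
      = ∑ i, ∑ j, W i j * (v i * (z i - z j)) + ∑ i, ∑ j, W i j * (v j * (z j - z i)) := by
    simp only [← Finset.sum_add_distrib]
    exact Finset.sum_congr rfl fun i _ => Finset.sum_congr rfl fun j _ => by ring
  rw [h1, h3, ← h2]
  ring

/-- The spectral theorem for a real symmetric matrix in terms of dot products: Parseval's identity
and the diagonalized quadratic form in a basis `b` of eigenvectors with eigenvalues `μ`. -/
theorem exists_spectral_expansion {n : ℕ} (L : Matrix (Fin n) (Fin n) ℝ) (hL : L.IsHermitian) :
    ∃ (μ : Fin n → ℝ) (b : Fin n → Fin n → ℝ), (∀ i, b i ≠ 0) ∧ (∀ i, L *ᵥ b i = μ i • b i) ∧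
      ∀ y : Fin n → ℝ, y ⬝ᵥ y = ∑ i, (b i ⬝ᵥ y) ^ 2 ∧
        y ⬝ᵥ (L *ᵥ y) = ∑ i, μ i * (b i ⬝ᵥ y) ^ 2 := by
  have hinner : ∀ (x : EuclideanSpace ℝ (Fin n)) (y : Fin n → ℝ),
      inner ℝ x (WithLp.toLp 2 y) = (x : Fin n → ℝ) ⬝ᵥ y := fun x y => by
    simp [PiLp.inner_apply, dotProduct, mul_comm]
  have hadj : ∀ i (y : Fin n → ℝ), (hL.eigenvectorBasis i : Fin n → ℝ) ⬝ᵥ (L *ᵥ y)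
      = hL.eigenvalues i * ((hL.eigenvectorBasis i : Fin n → ℝ) ⬝ᵥ y) := fun i y => by
    have hT : Lᵀ = L := by simpa [Matrix.conjTranspose_eq_transpose_of_trivial] using hL.eq
    rw [Matrix.dotProduct_mulVec, ← Matrix.mulVec_transpose, hT, hL.mulVec_eigenvectorBasis,
      smul_dotProduct, smul_eq_mul]
  have hexp : ∀ y w : Fin n → ℝ, y ⬝ᵥ w = ∑ i, ((hL.eigenvectorBasis i : Fin n → ℝ) ⬝ᵥ y) *
      ((hL.eigenvectorBasis i : Fin n → ℝ) ⬝ᵥ w) := fun y w => by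
    have h := hL.eigenvectorBasis.sum_inner_mul_inner (WithLp.toLp 2 y) (WithLp.toLp 2 w)
    rw [hinner] at h
    rw [← show _ = y ⬝ᵥ w from h]
    refine Finset.sum_congr rfl fun i _ => ?_
    rw [real_inner_comm, hinner, hinner]
  refine ⟨hL.eigenvalues, fun i => hL.eigenvectorBasis i, fun i h => ?_,
    fun i => hL.mulVec_eigenvectorBasis i, fun y => ⟨?_, ?_⟩⟩
  · apply hL.eigenvectorBasis.toBasis.ne_zero i
    ext j
    simpa using congrFun h j
  · rw [hexp]
    exact Finset.sum_congr rfl fun i _ => by ring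
  · rw [hexp]
    exact Finset.sum_congr rfl fun i _ => by rw [hadj]; ring

/-- For the Laplacian `L = D − W` of a connected undirected weighted graph
(symmetric nonnegative `W`, `L 𝟏 = 0`, `ker L = span 𝟏`), with smallest nonzero
eigenvalue `lam₂` and largest eigenvalue `lamₙ`, and `g` satisfying the incremental sector
bounds `κ (x−y)² ≤ (g x − g y)(x − y) ≤ 𝒦 (x−y)²` with `0 < κ ≤ 𝒦`, for every `z`:
`lam₂ κ ‖z̄‖₂² ≤ g(z)ᵀ L z ≤ lamₙ 𝒦 ‖z̄‖₂²` where `z̄ = z − (𝟏ᵀz/n) 𝟏`. -/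
theorem statement11 (n : ℕ) (W : Matrix (Fin n) (Fin n) ℝ)
    (hW_symm : ∀ i j, W i j = W j i) (hW_nonneg : ∀ i j, 0 ≤ W i j)
    (L : Matrix (Fin n) (Fin n) ℝ)
    (hL : L = Matrix.diagonal (fun i => ∑ j, W i j) - W)
    (hker : ∀ w : Fin n → ℝ, L *ᵥ w = 0 → ∃ c : ℝ, w = fun _ => c)
    (lam₂ lamₙ : ℝ)
    (hlamₙ_eig : ∃ w : Fin n → ℝ, w ≠ 0 ∧ L *ᵥ w = lamₙ • w)
    (hlamₙ_max : ∀ (μ : ℝ) (w : Fin n → ℝ), w ≠ 0 → L *ᵥ w = μ • w → μ ≤ lamₙ)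
    (hlam₂_eig : ∃ w : Fin n → ℝ, w ≠ 0 ∧ L *ᵥ w = lam₂ • w)
    (hlam₂_ne : lam₂ ≠ 0)
    (hlam₂_min : ∀ (μ : ℝ) (w : Fin n → ℝ), w ≠ 0 → L *ᵥ w = μ • w → μ ≠ 0 → lam₂ ≤ μ)
    (κ 𝒦 : ℝ) (hκ : 0 < κ) (hκ𝒦 : κ ≤ 𝒦)
    (g : ℝ → ℝ)
    (hsector_lb : ∀ x y : ℝ, κ * (x - y) ^ 2 ≤ (g x - g y) * (x - y))
    (hsector_ub : ∀ x y : ℝ, (g x - g y) * (x - y) ≤ 𝒦 * (x - y) ^ 2)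
    (z : Fin n → ℝ) :
    (lam₂ * κ * ∑ i, (z i - (∑ j, z j) / n) ^ 2 ≤ (fun i => g (z i)) ⬝ᵥ (L *ᵥ z)) ∧
    ((fun i => g (z i)) ⬝ᵥ (L *ᵥ z) ≤ lamₙ * 𝒦 * ∑ i, (z i - (∑ j, z j) / n) ^ 2) := by
  obtain ⟨y, hy⟩ : ∃ y : Fin n → ℝ, y = fun i => z i - (∑ j, z j) / n := ⟨_, rfl⟩
  have hherm : L.IsHermitian := by
    have hWh : W.IsHermitian := by
      ext i j
      simp [hW_symm i j]
    rw [hL]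
    exact (Matrix.isHermitian_diagonal _).sub hWh
  have hy0 : ∑ i, y i = 0 := by
    rcases Nat.eq_zero_or_pos n with h | h
    · subst h
      simp
    · have hn : (n : ℝ) ≠ 0 := by positivity
      simp only [hy, Finset.sum_sub_distrib, Finset.sum_const, Finset.card_univ,
        Fintype.card_fin, nsmul_eq_mul]
      field_simp
      ring
  have hyy : ∑ i, (z i - (∑ j, z j) / n) ^ 2 = y ⬝ᵥ y := by
    simp only [dotProduct, hy]
    exact Finset.sum_congr rfl fun i _ => by ring
  have hquad : y ⬝ᵥ (L *ᵥ y) = (1 / 2) * ∑ i, ∑ j, W i j * (z i - z j) ^ 2 := by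
    rw [hL, laplacian_bilin W hW_symm]
    congr 1
    refine Finset.sum_congr rfl fun i _ => Finset.sum_congr rfl fun j _ => ?_
    rw [hy]
    ring
  have hg : (fun i => g (z i)) ⬝ᵥ (L *ᵥ z)
      = (1 / 2) * ∑ i, ∑ j, W i j * ((g (z i) - g (z j)) * (z i - z j)) := by
    rw [hL, laplacian_bilin W hW_symm]
  have hlow : κ * (y ⬝ᵥ (L *ᵥ y)) ≤ (fun i => g (z i)) ⬝ᵥ (L *ᵥ z) := by
    rw [hg, hquad, mul_left_comm]
    refine mul_le_mul_of_nonneg_left ?_ (by norm_num)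
    simp only [Finset.mul_sum]
    refine Finset.sum_le_sum fun i _ => Finset.sum_le_sum fun j _ => ?_
    rw [mul_left_comm]
    exact mul_le_mul_of_nonneg_left (hsector_lb _ _) (hW_nonneg i j)
  have hupp : (fun i => g (z i)) ⬝ᵥ (L *ᵥ z) ≤ 𝒦 * (y ⬝ᵥ (L *ᵥ y)) := by
    rw [hg, hquad, mul_left_comm]
    refine mul_le_mul_of_nonneg_left ?_ (by norm_num)
    simp only [Finset.mul_sum]
    refine Finset.sum_le_sum fun i _ => Finset.sum_le_sum fun j _ => ?_
    rw [mul_left_comm 𝒦]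
    exact mul_le_mul_of_nonneg_left (hsector_ub _ _) (hW_nonneg i j)
  obtain ⟨μ, b, hb0, hb, hexp⟩ := exists_spectral_expansion L hherm
  obtain ⟨hpars, hdiag⟩ := hexp y
  have hrlow : lam₂ * (y ⬝ᵥ y) ≤ y ⬝ᵥ (L *ᵥ y) := by
    rw [hpars, hdiag, Finset.mul_sum]
    refine Finset.sum_le_sum fun i _ => ?_
    by_cases hμ : μ i = 0
    · -- A null eigenvector is constant, hence orthogonal to the centered vector `y`.
      obtain ⟨c, hc⟩ := hker (b i) (by rw [hb, hμ, zero_smul])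
      have : b i ⬝ᵥ y = 0 := by
        rw [hc]
        simp only [dotProduct, ← Finset.mul_sum, hy0, mul_zero]
      simp [this]
    · exact mul_le_mul_of_nonneg_right (hlam₂_min _ _ (hb0 i) (hb i) hμ) (sq_nonneg _)
  have hrupp : y ⬝ᵥ (L *ᵥ y) ≤ lamₙ * (y ⬝ᵥ y) := by
    rw [hpars, hdiag, Finset.mul_sum]
    exact Finset.sum_le_sum fun i _ =>
      mul_le_mul_of_nonneg_right (hlamₙ_max _ _ (hb0 i) (hb i)) (sq_nonneg _)
  rw [hyy]
  constructor
  · calc lam₂ * κ * (y ⬝ᵥ y) = κ * (lam₂ * (y ⬝ᵥ y)) := by ring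
      _ ≤ κ * (y ⬝ᵥ (L *ᵥ y)) := mul_le_mul_of_nonneg_left hrlow hκ.le
      _ ≤ _ := hlow
  · calc _ ≤ 𝒦 * (y ⬝ᵥ (L *ᵥ y)) := hupp
      _ ≤ 𝒦 * (lamₙ * (y ⬝ᵥ y)) := mul_le_mul_of_nonneg_left hrupp (hκ.le.trans hκ𝒦)
      _ = _ := by ring
end

section
/- Let g : ℝ → ℝ satisfy |g(x) − g(y)| ≤ 𝒦 |x − y| for all x, y ∈ ℝ with 𝒦 > 0. Then for every z ∈ ℝⁿ, the centered vectors satisfy ‖ g(z) − (𝟏ₙᵀg(z)/n)𝟏ₙ ‖₂ ≤ 𝒦 ‖ z − (𝟏ₙᵀz/n)𝟏ₙ ‖₂, where g(z) = (g(z_1),…,g(z_n)). -/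
/-!
The mean `m` of a vector `w` minimizes `c ↦ ∑ (w i - c) ^ 2` (`sum_sq_sub_mean_le`). Apply this to
`w = g(z)` with `c = g(m)`, where `m` is the mean of `z`, and then use the Lipschitz bound
`|g (z i) - g m| ≤ 𝒦 |z i - m|` coordinatewise.
-/

/-- The mean is the best constant approximation in the least squares sense; the defect is
`n * (mean - c) ^ 2`. -/
lemma sum_sq_sub_mean_le (n : ℕ) (w : Fin n → ℝ) (c : ℝ) :
    ∑ i, (w i - (∑ j, w j) / n) ^ 2 ≤ ∑ i, (w i - c) ^ 2 := by
  rcases Nat.eq_zero_or_pos n with rfl | hn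
  · simp
  have hn' : (n : ℝ) ≠ 0 := by positivity
  obtain ⟨m, hm⟩ : ∃ m, m = (∑ j, w j) / n := ⟨_, rfl⟩
  rw [← hm]
  have hsum : ∑ j, w j = n * m := by rw [hm]; field_simp
  have expand : ∀ a : ℝ, ∑ i, (w i - a) ^ 2 = ∑ i, w i ^ 2 - 2 * a * (n * m) + n * a ^ 2 := by
    intro a
    rw [← hsum, Finset.mul_sum, ← Finset.sum_sub_distrib]
    have hconst : (n : ℝ) * a ^ 2 = ∑ _i : Fin n, a ^ 2 := by simp
    rw [hconst, ← Finset.sum_add_distrib]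
    exact Finset.sum_congr rfl fun i _ => by ring
  rw [expand, expand]
  have hdefect : 0 ≤ (n : ℝ) * (m - c) ^ 2 := by positivity
  linarith

/-- If `g` is `𝒦`-Lipschitz (`|g x − g y| ≤ 𝒦 |x − y|`, `𝒦 > 0`), then the
centered vector of componentwise `g(z)` satisfies
`‖g(z) − (𝟏ᵀg(z)/n)𝟏‖₂ ≤ 𝒦 ‖z − (𝟏ᵀz/n)𝟏‖₂`. -/
theorem statement12 (n : ℕ) (g : ℝ → ℝ) (𝒦 : ℝ) (h𝒦 : 0 < 𝒦)
    (hlip : ∀ x y : ℝ, |g x - g y| ≤ 𝒦 * |x - y|)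
    (z : Fin n → ℝ) :
    Real.sqrt (∑ i, (g (z i) - (∑ j, g (z j)) / n) ^ 2) ≤
      𝒦 * Real.sqrt (∑ i, (z i - (∑ j, z j) / n) ^ 2) := by
  refine Real.sqrt_le_iff.mpr ⟨by positivity, ?_⟩
  rw [mul_pow, Real.sq_sqrt (by positivity), Finset.mul_sum]
  refine (sum_sq_sub_mean_le n (fun i => g (z i)) (g ((∑ j, z j) / n))).trans ?_
  refine Finset.sum_le_sum fun i _ => ?_
  rw [← mul_pow]
  apply sq_le_sq.mpr
  rw [abs_mul, abs_of_pos h𝒦]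
  exact hlip _ _
end

section
/- Let L be a real symmetric positive semidefinite n×n matrix with L𝟏ₙ = 0 and largest eigenvalue λ_n, and let g : ℝ → ℝ satisfy |g(x) − g(y)| ≤ 𝒦 |x − y| for all x, y, with 𝒦 > 0. Then for every z ∈ ℝⁿ, ‖ L g(z) ‖₂ ≤ λ_n 𝒦 ‖ z̄ ‖₂, where z̄ = z − (𝟏ₙᵀz/n)𝟏ₙ and g(z) = (g(z_1),…,g(z_n)); in particular ‖L g(z)‖₂² ≤ λ_n² 𝒦² ‖z̄‖₂². -/
/-!
Since `L` kills constants, `L g(z) = L v` with `v i = g (z i) - g m` and `m` the mean of `z`.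
Parseval in an orthonormal eigenbasis of `L` gives `‖L v‖₂ ≤ lamₙ ‖v‖₂`
(`sum_sq_mulVec_le_of_eigenvalues_le`), and the Lipschitz bound gives `|v i| ≤ 𝒦 |z i - m|`.
-/

open Matrix

/-- In coordinates with respect to an orthonormal eigenbasis, a positive semidefinite matrix scales
each coordinate by an eigenvalue in `[0, c]`, so it scales the Euclidean norm by at most `c`. -/
theorem sum_sq_mulVec_le_of_eigenvalues_le {n : ℕ} {L : Matrix (Fin n) (Fin n) ℝ}
    (hL : L.PosSemidef) {c : ℝ}
    (hc : ∀ (μ : ℝ) (w : Fin n → ℝ), w ≠ 0 → L *ᵥ w = μ • w → μ ≤ c) (v : Fin n → ℝ) :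
    ∑ i, ((L *ᵥ v) i) ^ 2 ≤ c ^ 2 * ∑ i, (v i) ^ 2 := by
  have hH := hL.isHermitian
  set b := hH.eigenvectorBasis with hb
  have hinner (x : EuclideanSpace ℝ (Fin n)) (u : Fin n → ℝ) :
      inner ℝ x (WithLp.toLp 2 u) = x.ofLp ⬝ᵥ u := by
    simp [PiLp.inner_apply, dotProduct, mul_comm]
  have hParseval (u : Fin n → ℝ) : ∑ i, (u i) ^ 2 = ∑ j, ((b j).ofLp ⬝ᵥ u) ^ 2 := by
    have h := b.sum_sq_norm_inner_right (WithLp.toLp 2 u)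
    simp only [hinner, EuclideanSpace.norm_sq_eq, Real.norm_eq_abs, sq_abs] at h
    exact h.symm
  have hcoord (j : Fin n) : (b j).ofLp ⬝ᵥ (L *ᵥ v) = hH.eigenvalues j * ((b j).ofLp ⬝ᵥ v) := by
    have hT : Lᵀ = L := by simpa [conjTranspose_eq_transpose_of_trivial] using hH.eq
    rw [dotProduct_mulVec, ← mulVec_transpose, hT, hb, hH.mulVec_eigenvectorBasis j,
      smul_dotProduct, smul_eq_mul]
  rw [hParseval, hParseval v, Finset.mul_sum]
  refine Finset.sum_le_sum fun j _ => ?_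
  have h0 : 0 ≤ hH.eigenvalues j := hL.eigenvalues_nonneg j
  have hle : hH.eigenvalues j ≤ c := by
    refine hc _ (b j).ofLp (fun h => ?_) (hH.mulVec_eigenvectorBasis j)
    exact b.orthonormal.ne_zero j (by ext i; simp [h])
  rw [hcoord, mul_pow]
  gcongr

/-- For a symmetric positive semidefinite `L` with `L 𝟏 = 0` and largest
eigenvalue `lamₙ`, and `g` `𝒦`-Lipschitz (`𝒦 > 0`), for every `z`:
`‖L g(z)‖₂ ≤ lamₙ 𝒦 ‖z̄‖₂` and `‖L g(z)‖₂² ≤ lamₙ² 𝒦² ‖z̄‖₂²`, where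
`z̄ = z − (𝟏ᵀz/n)𝟏` and `g(z)` is componentwise application. -/
theorem statement13 (n : ℕ) (L : Matrix (Fin n) (Fin n) ℝ)
    (hL_psd : L.PosSemidef)
    (hL_one : L *ᵥ (fun _ => (1 : ℝ)) = 0)
    (lamₙ : ℝ)
    (hlamₙ_eig : ∃ w : Fin n → ℝ, w ≠ 0 ∧ L *ᵥ w = lamₙ • w)
    (hlamₙ_max : ∀ (μ : ℝ) (w : Fin n → ℝ), w ≠ 0 → L *ᵥ w = μ • w → μ ≤ lamₙ)
    (g : ℝ → ℝ) (𝒦 : ℝ) (h𝒦 : 0 < 𝒦)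
    (hlip : ∀ x y : ℝ, |g x - g y| ≤ 𝒦 * |x - y|)
    (z : Fin n → ℝ) :
    (Real.sqrt (∑ i, ((L *ᵥ fun j => g (z j)) i) ^ 2) ≤
        lamₙ * 𝒦 * Real.sqrt (∑ i, (z i - (∑ j, z j) / n) ^ 2)) ∧
    (∑ i, ((L *ᵥ fun j => g (z j)) i) ^ 2 ≤
        lamₙ ^ 2 * 𝒦 ^ 2 * ∑ i, (z i - (∑ j, z j) / n) ^ 2) := by
  set m : ℝ := (∑ j, z j) / n
  set S : ℝ := ∑ i, (z i - m) ^ 2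
  have hlam : 0 ≤ lamₙ := by
    -- The nonzero eigenvector rules out `n = 0`, so `𝟏` is an eigenvector with eigenvalue `0`.
    obtain ⟨w, hw, -⟩ := hlamₙ_eig
    obtain ⟨i, -⟩ := Function.ne_iff.mp hw
    exact hlamₙ_max 0 _ (fun h => one_ne_zero (congrFun h i)) (by rw [hL_one, zero_smul])
  have hshift : L *ᵥ (fun j => g (z j)) = L *ᵥ (fun j => g (z j) - g m) := by
    have h : (fun j => g (z j) - g m) = (fun j => g (z j)) - g m • (fun _ => (1 : ℝ)) := by
      ext j; simp
    rw [h, mulVec_sub, mulVec_smul, hL_one, smul_zero, sub_zero]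
  have hv : ∑ i, (g (z i) - g m) ^ 2 ≤ 𝒦 ^ 2 * S := by
    rw [Finset.mul_sum]
    refine Finset.sum_le_sum fun i _ => ?_
    rw [← sq_abs, ← sq_abs (z i - m), ← mul_pow]
    exact pow_le_pow_left₀ (abs_nonneg _) (hlip _ _) 2
  have hsq : ∑ i, ((L *ᵥ fun j => g (z j)) i) ^ 2 ≤ lamₙ ^ 2 * 𝒦 ^ 2 * S := by
    rw [hshift, mul_assoc]
    exact (sum_sq_mulVec_le_of_eigenvalues_le hL_psd hlamₙ_max _).trans
      (mul_le_mul_of_nonneg_left hv (sq_nonneg _))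
  refine ⟨?_, hsq⟩
  have hS : 0 ≤ S := Finset.sum_nonneg fun i _ => sq_nonneg _
  refine Real.sqrt_le_iff.mpr ⟨by positivity, ?_⟩
  rwa [mul_pow, mul_pow, Real.sq_sqrt hS]
end

section
/- Let h_i : ℝ → ℝ be twice continuously differentiable with 2v ≤ h_i''(x) ≤ 2u for all x, where 0 < v ≤ u, and H(z) = ∑_{i=1}^n h_i(z_i). Let a ∈ ℝⁿ with a_i ∈ {−1,+1}, A = diag(a), b ∈ ℝ, and let z* be the unique minimizer of H over {z : ∑_i a_i z_i = b}. Let L be the Laplacian of a connected undirected weighted graph with smallest nonzero eigenvalue λ_2 and largest eigenvalue λ_n, and let g : ℝ → ℝ be odd with incremental sector bounds κ(x−y)² ≤ (g(x)−g(y))(x−y) ≤ 𝒦(x−y)² (0 < κ ≤ 𝒦). If 0 < η < κλ_2/(u λ_n² 𝒦²) and z(0) satisfies ∑_i a_i z_i(0) = b, then the sequence z(k+1) = z(k) − η A L g(A∇H(z(k))) satisfies ∑_i a_i z_i(k) = b for all k, the residual H(z(k)) − H(z*) is nonincreasing, and z(k) converges to z* as k → ∞. -/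
/-!
Put `x i = a i * h i' (z i)` and `Q x = x ⬝ᵥ L *ᵥ x = ½ ∑ W i j (x i - x j)²`.

* Feasibility is preserved because `a i ^ 2 = 1` and the columns of `L` sum to zero.
* The quadratic upper bound coming from `h i'' ≤ 2u` gives
  `H (z⁺) ≤ H z - η x ⬝ᵥ L g(x) + u η² |L g(x)|²`. Writing the Laplacian form as a sum over edges,
  the sector bounds give `x ⬝ᵥ L g(x) ≥ κ Q x` and `Q (g x) ≤ 𝒦² Q x`, while the largest eigenvalue
  gives `|L y|² ≤ lamₙ Q y`. Hence `H (z⁺) ≤ H z - c Q x` with `c = η (κ - u η lamₙ 𝒦²)`, which is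
  positive because `lam₂ ≤ lamₙ`.
* `H` is bounded below on the feasible set, so `Q (x k)` is summable and tends to zero.
* If `e = A (z* - z)`, then `∑ e i = 0`, so strong convexity and the minimality of `z*` give
  `v |e|² ≤ -⟨x, e⟩ = -⟨x - mean x, e⟩`, hence `v² |e|² ≤ |x - mean x|² ≤ Q x / lam₂`. The last step
  is the spectral gap (`laplacian_gap`). Therefore `z k → z*`.
-/

open Matrix

/-- First-order characterisation of convexity, in the form used for both quadratic bounds. -/
lemma tangent_le_of_second_deriv_nonneg {f f' f'' : ℝ → ℝ} (h1 : ∀ x, HasDerivAt f (f' x) x)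
    (h2 : ∀ x, HasDerivAt f' (f'' x) x) (h3 : ∀ x, 0 ≤ f'' x) (x y : ℝ) :
    f x + f' x * (y - x) ≤ f y := by
  have hmono : Monotone f' := by
    apply monotone_of_deriv_nonneg (fun x => (h2 x).differentiableAt)
    intro x; rw [(h2 x).deriv]; exact h3 x
  have hc : Continuous f := continuous_iff_continuousAt.2 fun x => (h1 x).continuousAt
  rcases lt_trichotomy x y with hxy | rfl | hxy
  · obtain ⟨c, hcm, hceq⟩ := exists_hasDerivAt_eq_slope f f' hxy hc.continuousOn (fun t _ => h1 t)
    rw [eq_div_iff (by linarith)] at hceq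
    nlinarith [hmono hcm.1.le]
  · simp
  · obtain ⟨c, hcm, hceq⟩ := exists_hasDerivAt_eq_slope f f' hxy hc.continuousOn (fun t _ => h1 t)
    rw [eq_div_iff (by linarith)] at hceq
    nlinarith [hmono hcm.2.le]

lemma quadratic_bounds {f : ℝ → ℝ} {v u : ℝ} (hf : ContDiff ℝ 2 f)
    (hlb : ∀ x, 2 * v ≤ deriv (deriv f) x) (hub : ∀ x, deriv (deriv f) x ≤ 2 * u) (x y : ℝ) :
    f x + deriv f x * (y - x) + v * (y - x) ^ 2 ≤ f y ∧
    f y ≤ f x + deriv f x * (y - x) + u * (y - x) ^ 2 := by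
  have h1 : ∀ x, HasDerivAt f (deriv f x) x := fun x =>
    (hf.differentiable (by norm_num) x).hasDerivAt
  have h2 : ∀ x, HasDerivAt (deriv f) (deriv (deriv f) x) x := fun x => by
    have : ContDiff ℝ 1 (deriv f) := ((contDiff_succ_iff_deriv (n := 1)).1 hf).2.2
    exact (this.differentiable (by norm_num) x).hasDerivAt
  have hsq : ∀ c x : ℝ, HasDerivAt (fun t : ℝ => c * t ^ 2) (2 * c * x) x := fun c x => by
    have := ((hasDerivAt_id x).pow 2).const_mul c
    refine this.congr_deriv ?_
    simp only [id, Nat.cast_ofNat]; ring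
  have hlin : ∀ c x : ℝ, HasDerivAt (fun t : ℝ => 2 * c * t) (2 * c) x := fun c x => by
    simpa using (hasDerivAt_id x).const_mul (2 * c)
  constructor
  · have := tangent_le_of_second_deriv_nonneg (fun x => (h1 x).sub (hsq v x))
      (fun x => (h2 x).sub (hlin v x)) (fun x => by linarith [hlb x]) x y
    simp only [Pi.sub_apply] at this
    nlinarith
  · have := tangent_le_of_second_deriv_nonneg (fun x => (hsq u x).sub (h1 x))
      (fun x => (hlin u x).sub (h2 x)) (fun x => by linarith [hub x]) x y
    simp only [Pi.sub_apply] at this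
    nlinarith

section Laplacian

variable {n : ℕ} {W L : Matrix (Fin n) (Fin n) ℝ}

lemma laplacian_mulVec_apply (hL : L = Matrix.diagonal (fun i => ∑ j, W i j) - W)
    (y : Fin n → ℝ) (i : Fin n) : (L *ᵥ y) i = ∑ j, W i j * (y i - y j) := by
  subst hL
  rw [Matrix.sub_mulVec, Pi.sub_apply, Matrix.mulVec_diagonal]
  simp only [Matrix.mulVec, dotProduct, mul_sub, Finset.sum_sub_distrib, Finset.sum_mul]

/-- The bilinear form of a Laplacian as a sum over edges, each edge being counted twice. -/
lemma laplacian_form (hW : ∀ i j, W i j = W j i)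
    (hL : L = Matrix.diagonal (fun i => ∑ j, W i j) - W) (x y : Fin n → ℝ) :
    2 * (x ⬝ᵥ L *ᵥ y) = ∑ i, ∑ j, W i j * ((x i - x j) * (y i - y j)) := by
  have h1 : x ⬝ᵥ L *ᵥ y = ∑ i, ∑ j, W i j * (x i * (y i - y j)) := by
    simp only [dotProduct, laplacian_mulVec_apply hL, Finset.mul_sum]
    exact Finset.sum_congr rfl fun i _ => Finset.sum_congr rfl fun j _ => by ring
  have h2 : x ⬝ᵥ L *ᵥ y = ∑ i, ∑ j, W i j * (x j * (y j - y i)) := by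
    rw [h1, Finset.sum_comm]
    exact Finset.sum_congr rfl fun i _ => Finset.sum_congr rfl fun j _ => by rw [hW j i]
  rw [two_mul]
  nth_rewrite 1 [h1]
  rw [h2, ← Finset.sum_add_distrib]
  refine Finset.sum_congr rfl fun i _ => ?_
  rw [← Finset.sum_add_distrib]
  exact Finset.sum_congr rfl fun j _ => by ring

lemma laplacian_form_mono (hW : ∀ i j, W i j = W j i) (hW0 : ∀ i j, 0 ≤ W i j)
    (hL : L = Matrix.diagonal (fun i => ∑ j, W i j) - W) {c : ℝ} {x y x' y' : Fin n → ℝ}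
    (h : ∀ i j, c * ((x i - x j) * (y i - y j)) ≤ (x' i - x' j) * (y' i - y' j)) :
    c * (x ⬝ᵥ L *ᵥ y) ≤ x' ⬝ᵥ L *ᵥ y' := by
  have : c * (2 * (x ⬝ᵥ L *ᵥ y)) ≤ 2 * (x' ⬝ᵥ L *ᵥ y') := by
    rw [laplacian_form hW hL, laplacian_form hW hL, Finset.mul_sum]
    refine Finset.sum_le_sum fun i _ => ?_
    rw [Finset.mul_sum]
    refine Finset.sum_le_sum fun j _ => ?_
    nlinarith [mul_le_mul_of_nonneg_left (h i j) (hW0 i j)]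
  linarith

lemma laplacian_form_nonneg (hW : ∀ i j, W i j = W j i) (hW0 : ∀ i j, 0 ≤ W i j)
    (hL : L = Matrix.diagonal (fun i => ∑ j, W i j) - W) (x : Fin n → ℝ) :
    0 ≤ x ⬝ᵥ L *ᵥ x := by
  have := laplacian_form_mono hW hW0 hL (c := 0) (x := x) (y := x) (x' := x) (y' := x)
    (fun i j => by simpa using mul_self_nonneg (x i - x j))
  simpa using this

lemma laplacian_form_comm (hW : ∀ i j, W i j = W j i)
    (hL : L = Matrix.diagonal (fun i => ∑ j, W i j) - W) (x y : Fin n → ℝ) :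
    x ⬝ᵥ L *ᵥ y = y ⬝ᵥ L *ᵥ x := by
  have : 2 * (x ⬝ᵥ L *ᵥ y) = 2 * (y ⬝ᵥ L *ᵥ x) := by
    rw [laplacian_form hW hL, laplacian_form hW hL]
    exact Finset.sum_congr rfl fun i _ => Finset.sum_congr rfl fun j _ => by ring
  linarith

lemma laplacian_sum_mulVec (hW : ∀ i j, W i j = W j i)
    (hL : L = Matrix.diagonal (fun i => ∑ j, W i j) - W) (y : Fin n → ℝ) :
    ∑ i, (L *ᵥ y) i = 0 := by
  have h1 : 2 * ((fun _ => (1 : ℝ)) ⬝ᵥ L *ᵥ y) = 0 := by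
    rw [laplacian_form hW hL]; simp
  simp only [dotProduct, one_mul] at h1
  linarith

lemma laplacian_isHermitian (hW : ∀ i j, W i j = W j i)
    (hL : L = Matrix.diagonal (fun i => ∑ j, W i j) - W) : L.IsHermitian := by
  subst hL
  refine (Matrix.isHermitian_diagonal _).sub ?_
  ext i j
  simp [hW j i]

/-- A real symmetric matrix whose eigenvalues are all nonnegative has a nonnegative form. -/
lemma form_nonneg_of_eigenvalues {M : Matrix (Fin n) (Fin n) ℝ} (hM : M.IsHermitian)
    (h : ∀ (μ : ℝ) (w : Fin n → ℝ), w ≠ 0 → M *ᵥ w = μ • w → 0 ≤ μ) (x : Fin n → ℝ) :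
    0 ≤ x ⬝ᵥ M *ᵥ x := by
  have hps : M.PosSemidef := by
    rw [hM.posSemidef_iff_eigenvalues_nonneg]
    intro i
    refine h _ _ ?_ (hM.mulVec_eigenvectorBasis i)
    have := hM.eigenvectorBasis.orthonormal.ne_zero i
    intro h0
    exact this (by ext j; exact congrFun h0 j)
  simpa using hps.dotProduct_mulVec_nonneg x

/-- `|L y|² ≤ lamₙ (y ⬝ᵥ L y)`: the Rayleigh bound at `L y`, combined with nonnegativity of the
form at `lamₙ y - L y`. -/
lemma laplacian_sq_le (hW : ∀ i j, W i j = W j i) (hW0 : ∀ i j, 0 ≤ W i j)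
    (hL : L = Matrix.diagonal (fun i => ∑ j, W i j) - W) {lamₙ : ℝ} (hpos : 0 < lamₙ)
    (hmax : ∀ (μ : ℝ) (w : Fin n → ℝ), w ≠ 0 → L *ᵥ w = μ • w → μ ≤ lamₙ) (y : Fin n → ℝ) :
    (L *ᵥ y) ⬝ᵥ (L *ᵥ y) ≤ lamₙ * (y ⬝ᵥ L *ᵥ y) := by
  have hR : ∀ x : Fin n → ℝ, x ⬝ᵥ L *ᵥ x ≤ lamₙ * (x ⬝ᵥ x) := by
    intro x
    have hM : (lamₙ • (1 : Matrix (Fin n) (Fin n) ℝ) - L).IsHermitian := by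
      refine Matrix.IsHermitian.sub ?_ (laplacian_isHermitian hW hL)
      ext i j
      simp [Matrix.one_apply, eq_comm]
    have := form_nonneg_of_eigenvalues hM (fun μ w hw hμ => ?_) x
    · simp only [Matrix.sub_mulVec, Matrix.smul_mulVec, Matrix.one_mulVec, dotProduct_sub,
        dotProduct_smul, smul_eq_mul] at this
      linarith
    · rw [Matrix.sub_mulVec, Matrix.smul_mulVec, Matrix.one_mulVec] at hμ
      have := hmax (lamₙ - μ) w hw (by rw [sub_smul, ← hμ]; abel)
      linarith
  set p := L *ᵥ y with hp
  have h1 := hR p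
  have h2 := laplacian_form_nonneg hW hW0 hL (lamₙ • y - p)
  have h3 : y ⬝ᵥ L *ᵥ p = p ⬝ᵥ p := by
    rw [laplacian_form_comm hW hL]
  simp only [Matrix.mulVec_sub, Matrix.mulVec_smul, dotProduct_sub, sub_dotProduct,
    dotProduct_smul, smul_dotProduct, smul_eq_mul, h3, ← hp] at h2
  have h4 : 0 ≤ lamₙ * (lamₙ * (y ⬝ᵥ p) - p ⬝ᵥ p) := by nlinarith
  have := nonneg_of_mul_nonneg_right h4 hpos
  linarith

/-- Spectral gap: `lam₂ |x - mean x|² ≤ x ⬝ᵥ L x`. The matrix `L + (lam₂ / n) J - lam₂ I`, with `J`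
the all-ones matrix, has no negative eigenvalue. -/
lemma laplacian_gap (hn : 0 < n) (hW : ∀ i j, W i j = W j i)
    (hL : L = Matrix.diagonal (fun i => ∑ j, W i j) - W)
    (hker : ∀ w : Fin n → ℝ, L *ᵥ w = 0 → ∃ c : ℝ, w = fun _ => c) {lam₂ : ℝ}
    (hmin : ∀ (μ : ℝ) (w : Fin n → ℝ), w ≠ 0 → L *ᵥ w = μ • w → μ ≠ 0 → lam₂ ≤ μ)
    (x : Fin n → ℝ) :
    lam₂ * ∑ i, (x i - (∑ j, x j) / n) ^ 2 ≤ x ⬝ᵥ L *ᵥ x := by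
  have hn' : (n : ℝ) ≠ 0 := by positivity
  set M : Matrix (Fin n) (Fin n) ℝ :=
    L + Matrix.of (fun _ _ => lam₂ / n) - lam₂ • (1 : Matrix (Fin n) (Fin n) ℝ) with hMdef
  have hM : M.IsHermitian := by
    refine Matrix.IsHermitian.sub ((laplacian_isHermitian hW hL).add ?_) ?_
    · ext i j; simp
    · ext i j; simp [Matrix.one_apply, eq_comm]
  have hMv : ∀ w : Fin n → ℝ, M *ᵥ w = fun i => (L *ᵥ w) i + lam₂ / n * ∑ j, w j - lam₂ * w i := by
    intro w
    ext i
    rw [hMdef, Matrix.sub_mulVec, Matrix.add_mulVec, Matrix.smul_mulVec, Matrix.one_mulVec]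
    simp [Matrix.mulVec, dotProduct, Finset.mul_sum]
  have key := form_nonneg_of_eigenvalues hM (fun μ w hw hμ => ?_) x
  · rw [hMv] at key
    have e1 : (x ⬝ᵥ fun i => (L *ᵥ x) i + lam₂ / n * ∑ j, x j - lam₂ * x i)
        = x ⬝ᵥ L *ᵥ x + lam₂ / n * (∑ j, x j) ^ 2 - lam₂ * ∑ i, x i ^ 2 := by
      simp only [dotProduct, mul_sub, mul_add, Finset.sum_sub_distrib, Finset.sum_add_distrib]
      rw [← Finset.sum_mul, Finset.mul_sum Finset.univ (fun i => x i ^ 2)]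
      congr 1
      · ring
      · exact Finset.sum_congr rfl fun i _ => by ring
    have e2 : ∑ i, (x i - (∑ j, x j) / n) ^ 2 = ∑ i, x i ^ 2 - (∑ j, x j) ^ 2 / n := by
      simp only [sub_sq, Finset.sum_add_distrib, Finset.sum_sub_distrib, ← Finset.sum_mul,
        ← Finset.mul_sum, Finset.sum_const, Finset.card_univ, Fintype.card_fin, nsmul_eq_mul]
      field_simp
      ring
    rw [e1] at key
    rw [e2]
    have e3 : lam₂ * (∑ i, x i ^ 2 - (∑ j, x j) ^ 2 / n)
        = lam₂ * ∑ i, x i ^ 2 - lam₂ / n * (∑ j, x j) ^ 2 := by ring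
    rw [e3]; linarith
  · rw [hMv] at hμ
    -- Summing the eigenvalue equation shows that `w` has zero sum unless `μ = 0`.
    have hs : μ * ∑ j, w j = 0 := by
      have := congrArg (fun f : Fin n → ℝ => ∑ i, f i) hμ
      simp only [Finset.sum_sub_distrib, Finset.sum_add_distrib, laplacian_sum_mulVec hW hL,
        ← Finset.mul_sum, Finset.sum_const, Finset.card_univ, Fintype.card_fin, nsmul_eq_mul,
        Pi.smul_apply, smul_eq_mul] at this
      rw [← this]; field_simp; ring
    rcases mul_eq_zero.1 hs with h0 | h0
    · exact h0.ge
    · have hLw : L *ᵥ w = (lam₂ + μ) • w := by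
        ext i
        have := congrFun hμ i
        simp only [h0, Pi.smul_apply, smul_eq_mul] at this ⊢
        linarith
      by_cases hz : lam₂ + μ = 0
      · exfalso
        rw [hz, zero_smul] at hLw
        obtain ⟨c, hc⟩ := hker w hLw
        apply hw
        rw [hc] at h0 ⊢
        simp only [Finset.sum_const, Finset.card_univ, Fintype.card_fin, nsmul_eq_mul] at h0
        rcases mul_eq_zero.1 h0 with h | h
        · exact absurd h hn'
        · rw [h]; rfl
      · have := hmin _ w hw hLw hz
        linarith

end Laplacian

/-- A sequence that decreases by at least `c * q k` at each step while staying bounded below forces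
the nonnegative sequence `q` to zero. -/
lemma tendsto_zero_of_descent {F q : ℕ → ℝ} {c m : ℝ} (hc : 0 < c) (hq : ∀ k, 0 ≤ q k)
    (hF : ∀ k, m ≤ F k) (hd : ∀ k, F (k + 1) ≤ F k - c * q k) :
    Filter.Tendsto q Filter.atTop (nhds 0) := by
  apply Summable.tendsto_atTop_zero
  refine summable_of_sum_range_le (c := (F 0 - m) / c) hq fun N => ?_
  have h1 : ∀ N, c * ∑ k ∈ Finset.range N, q k ≤ F 0 - F N := by
    intro N
    induction N with
    | zero => simp
    | succ N ih => rw [Finset.sum_range_succ, mul_add]; linarith [hd N]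
  rw [le_div_iff₀ hc]
  linarith [h1 N, hF N]

/-- Convergence of the discrete nonlinear Laplacian-gradient iteration.
With `H(z) = ∑ i, h i (z i)` where `2v ≤ (h i)'' ≤ 2u` (`0 < v ≤ u`), `z*` the unique
minimizer of `H` over `{z | ∑ i, a i * z i = b}`, `L` the Laplacian of a connected
undirected weighted graph with eigen-extremes `lam₂, lamₙ`, `g` odd with incremental sector
bounds `κ, 𝒦`, and `0 < η < κlam₂/(ulamₙ²𝒦²)`, starting from a feasible `z 0` the iterates
`z (k+1) = z k − η A L g(A∇H(z k))` remain feasible for all `k`, the residual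
`H(z k) − H(z*)` is nonincreasing, and `z k → z*`. -/
theorem statement16 (n : ℕ) (v u : ℝ) (hv : 0 < v) (hvu : v ≤ u)
    (h : Fin n → ℝ → ℝ) (hsmooth : ∀ i, ContDiff ℝ 2 (h i))
    (hlb : ∀ i x, 2 * v ≤ deriv (deriv (h i)) x)
    (hub : ∀ i x, deriv (deriv (h i)) x ≤ 2 * u)
    (a : Fin n → ℝ) (ha : ∀ i, a i = 1 ∨ a i = -1) (b : ℝ)
    (zstar : Fin n → ℝ)
    (hzstar_feas : ∑ i, a i * zstar i = b)
    (hzstar_min : ∀ w : Fin n → ℝ, ∑ i, a i * w i = b →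
      ∑ i, h i (zstar i) ≤ ∑ i, h i (w i))
    (hzstar_uniq : ∀ w : Fin n → ℝ, ∑ i, a i * w i = b →
      (∀ w' : Fin n → ℝ, ∑ i, a i * w' i = b → ∑ i, h i (w i) ≤ ∑ i, h i (w' i)) →
      w = zstar)
    (W : Matrix (Fin n) (Fin n) ℝ)
    (hW_symm : ∀ i j, W i j = W j i) (hW_nonneg : ∀ i j, 0 ≤ W i j)
    (L : Matrix (Fin n) (Fin n) ℝ)
    (hL : L = Matrix.diagonal (fun i => ∑ j, W i j) - W)
    (hker : ∀ w : Fin n → ℝ, L *ᵥ w = 0 → ∃ c : ℝ, w = fun _ => c)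
    (lam₂ lamₙ : ℝ)
    (hlamₙ_eig : ∃ w : Fin n → ℝ, w ≠ 0 ∧ L *ᵥ w = lamₙ • w)
    (hlamₙ_max : ∀ (μ : ℝ) (w : Fin n → ℝ), w ≠ 0 → L *ᵥ w = μ • w → μ ≤ lamₙ)
    (hlam₂_eig : ∃ w : Fin n → ℝ, w ≠ 0 ∧ L *ᵥ w = lam₂ • w)
    (hlam₂_ne : lam₂ ≠ 0)
    (hlam₂_min : ∀ (μ : ℝ) (w : Fin n → ℝ), w ≠ 0 → L *ᵥ w = μ • w → μ ≠ 0 → lam₂ ≤ μ)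
    (g : ℝ → ℝ) (hg_odd : ∀ x, g (-x) = -g x)
    (κ 𝒦 : ℝ) (hκ : 0 < κ) (hκ𝒦 : κ ≤ 𝒦)
    (hsector_lb : ∀ x y : ℝ, κ * (x - y) ^ 2 ≤ (g x - g y) * (x - y))
    (hsector_ub : ∀ x y : ℝ, (g x - g y) * (x - y) ≤ 𝒦 * (x - y) ^ 2)
    (η : ℝ) (hη_pos : 0 < η) (hη : η < κ * lam₂ / (u * lamₙ ^ 2 * 𝒦 ^ 2))
    (z : ℕ → Fin n → ℝ)
    (hinit : ∑ i, a i * z 0 i = b)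
    (hiter : ∀ k, z (k + 1) = z k - η • ((Matrix.diagonal a * L) *ᵥ
      fun i => g (a i * deriv (h i) (z k i)))) :
    (∀ k, ∑ i, a i * z k i = b) ∧
    (∀ k, ∑ i, h i (z (k + 1) i) - ∑ i, h i (zstar i) ≤
      ∑ i, h i (z k i) - ∑ i, h i (zstar i)) ∧
    Filter.Tendsto z Filter.atTop (nhds zstar) := by
  have hu : 0 < u := hv.trans_le hvu
  have h𝒦 : 0 < 𝒦 := hκ.trans_le hκ𝒦
  have haa : ∀ i, a i * a i = 1 := fun i => by rcases ha i with h | h <;> simp [h]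
  have hQ0 := laplacian_form_nonneg hW_symm hW_nonneg hL
  have hn : 0 < n := by
    obtain ⟨w, hw, -⟩ := hlam₂_eig
    rcases Nat.eq_zero_or_pos n with rfl | h0
    · exact absurd (Subsingleton.elim w 0) hw
    · exact h0
  have hlam₂ : 0 < lam₂ := by
    obtain ⟨w, hw, hLw⟩ := hlam₂_eig
    have h1 := hQ0 w
    rw [hLw, dotProduct_smul, smul_eq_mul] at h1
    have h2 : 0 < w ⬝ᵥ w :=
      lt_of_le_of_ne (Finset.sum_nonneg fun i _ => mul_self_nonneg _)
        (fun h => hw (dotProduct_self_eq_zero.1 h.symm))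
    exact lt_of_le_of_ne (nonneg_of_mul_nonneg_left h1 h2) hlam₂_ne.symm
  have hlam : lam₂ ≤ lamₙ := by
    obtain ⟨w, hw, hLw⟩ := hlam₂_eig
    exact hlamₙ_max _ w hw hLw
  have hlamₙ : 0 < lamₙ := hlam₂.trans_le hlam
  have hc : 0 < η * (κ - u * η * lamₙ * 𝒦 ^ 2) := by
    refine mul_pos hη_pos ?_
    rw [lt_div_iff₀ (by positivity)] at hη
    have h1 : lamₙ * (u * η * lamₙ * 𝒦 ^ 2) < lamₙ * κ := by nlinarith
    linarith [lt_of_mul_lt_mul_left h1 hlamₙ.le]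
  have hqb := fun i => quadratic_bounds (hsmooth i) (hlb i) (hub i)
  set x : ℕ → Fin n → ℝ := fun k i => a i * deriv (h i) (z k i) with hx
  set G : ℕ → Fin n → ℝ := fun k i => g (x k i) with hG
  have hstep : ∀ k i, z (k + 1) i = z k i - η * (a i * (L *ᵥ G k) i) := by
    intro k i
    rw [hiter k, ← Matrix.mulVec_mulVec, Pi.sub_apply, Pi.smul_apply, Matrix.mulVec_diagonal,
      smul_eq_mul]
  have hfeas : ∀ k, ∑ i, a i * z k i = b := by
    intro k
    induction k with
    | zero => exact hinit
    | succ k ih =>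
      have : ∀ i, a i * z (k + 1) i = a i * z k i - η * (L *ᵥ G k) i := fun i => by
        rw [hstep]; linear_combination (-η * (L *ᵥ G k) i) * haa i
      simp only [this, Finset.sum_sub_distrib, ← Finset.mul_sum,
        laplacian_sum_mulVec hW_symm hL, ih]
      ring
  have hdesc : ∀ k, ∑ i, h i (z (k + 1) i) ≤
      ∑ i, h i (z k i) - η * (κ - u * η * lamₙ * 𝒦 ^ 2) * (x k ⬝ᵥ L *ᵥ x k) := by
    intro k
    have h1 : ∑ i, h i (z (k + 1) i) ≤ ∑ i, h i (z k i) - η * (x k ⬝ᵥ L *ᵥ G k)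
        + u * η ^ 2 * ((L *ᵥ G k) ⬝ᵥ (L *ᵥ G k)) := by
      simp only [dotProduct, Finset.mul_sum]
      rw [← Finset.sum_sub_distrib, ← Finset.sum_add_distrib]
      refine Finset.sum_le_sum fun i _ => ?_
      have h2 := (hqb i (z k i) (z (k + 1) i)).2
      rw [hstep k i] at h2 ⊢
      refine h2.trans (le_of_eq ?_)
      simp only [hx]
      linear_combination (u * η ^ 2 * (L *ᵥ G k) i ^ 2) * haa i
    have h2 : κ * (x k ⬝ᵥ L *ᵥ x k) ≤ x k ⬝ᵥ L *ᵥ G k :=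
      laplacian_form_mono hW_symm hW_nonneg hL fun i j => by
        have := hsector_lb (x k i) (x k j)
        simp only [hG]; linarith
    have h3 : (𝒦 ^ 2)⁻¹ * (G k ⬝ᵥ L *ᵥ G k) ≤ x k ⬝ᵥ L *ᵥ x k :=
      laplacian_form_mono hW_symm hW_nonneg hL fun i j => by
        have hl := hsector_lb (x k i) (x k j)
        have hU := hsector_ub (x k i) (x k j)
        simp only [hG]
        rw [inv_mul_le_iff₀ (by positivity)]
        rcases eq_or_ne (x k i) (x k j) with hij | hij
        · simp [hij]
        have hd : x k i - x k j ≠ 0 := sub_ne_zero.2 hij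
        -- With `p = g x - g y`, `d = x - y`: `0 ≤ p d ≤ 𝒦 d²` forces `p² ≤ 𝒦² d²`.
        generalize g (x k i) - g (x k j) = p at *
        generalize x k i - x k j = d at *
        have hpd : 0 ≤ p * d := le_trans (by positivity) hl
        have hd2 : 0 < d ^ 2 := by positivity
        have hsq : (p * d) * (p * d) ≤ (𝒦 * d ^ 2) * (𝒦 * d ^ 2) := mul_self_le_mul_self hpd hU
        refine le_of_mul_le_mul_right ?_ hd2
        linarith
    have h4 := laplacian_sq_le hW_symm hW_nonneg hL hlamₙ hlamₙ_max (G k)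
    rw [inv_mul_le_iff₀ (by positivity)] at h3
    have h5 : (L *ᵥ G k) ⬝ᵥ (L *ᵥ G k) ≤ lamₙ * (𝒦 ^ 2 * (x k ⬝ᵥ L *ᵥ x k)) :=
      h4.trans (mul_le_mul_of_nonneg_left h3 hlamₙ.le)
    have h6 := mul_le_mul_of_nonneg_left h5 (by positivity : 0 ≤ u * η ^ 2)
    have h7 := mul_le_mul_of_nonneg_left h2 hη_pos.le
    linarith
  refine ⟨hfeas, fun k => ?_, ?_⟩
  · have := mul_nonneg hc.le (hQ0 (x k))
    linarith [hdesc k]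
  have hQ : Filter.Tendsto (fun k => x k ⬝ᵥ L *ᵥ x k) Filter.atTop (nhds 0) :=
    tendsto_zero_of_descent hc (fun k => hQ0 (x k)) (fun k => hzstar_min _ (hfeas k)) hdesc
  have herr : ∀ k, ∑ i, (z k i - zstar i) ^ 2 ≤ (v ^ 2 * lam₂)⁻¹ * (x k ⬝ᵥ L *ᵥ x k) := by
    intro k
    set m := (∑ j, x k j) / n with hm
    have hgap := laplacian_gap hn hW_symm hL hker hlam₂_min (x k)
    rw [← hm] at hgap
    have hmin := hzstar_min _ (hfeas k)
    have hz0 : ∑ i, a i * (zstar i - z k i) = 0 := by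
      simp only [mul_sub, Finset.sum_sub_distrib, hfeas k, hzstar_feas, sub_self]
    -- Strong convexity at `z k`, with the mean of `x k` subtracted, followed by Young's inequality.
    have h1 : ∑ i, v / 2 * (z k i - zstar i) ^ 2 - ∑ i, 1 / (2 * v) * (x k i - m) ^ 2
        + m * ∑ i, a i * (zstar i - z k i) + ∑ i, h i (z k i) ≤ ∑ i, h i (zstar i) := by
      rw [Finset.mul_sum, ← Finset.sum_sub_distrib, ← Finset.sum_add_distrib,
        ← Finset.sum_add_distrib]
      refine Finset.sum_le_sum fun i _ => ?_
      have h2 := (hqb i (z k i) (zstar i)).1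
      have h3 : deriv (h i) (z k i) * (zstar i - z k i)
          = (x k i - m) * (a i * (zstar i - z k i)) + m * (a i * (zstar i - z k i)) := by
        simp only [hx]
        linear_combination (-deriv (h i) (z k i) * (zstar i - z k i)) * haa i
      have h4 : (a i * (zstar i - z k i)) ^ 2 = (z k i - zstar i) ^ 2 := by
        linear_combination ((z k i - zstar i) ^ 2) * haa i
      have h5 : 0 ≤ 1 / (2 * v) * ((x k i - m) + v * (a i * (zstar i - z k i))) ^ 2 := by
        positivity
      have h6 : 1 / (2 * v) * ((x k i - m) + v * (a i * (zstar i - z k i))) ^ 2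
          = 1 / (2 * v) * (x k i - m) ^ 2 + (x k i - m) * (a i * (zstar i - z k i))
            + v / 2 * (a i * (zstar i - z k i)) ^ 2 := by
        field_simp; ring
      rw [h6, h4] at h5
      rw [h3] at h2
      nlinarith
    rw [hz0, ← Finset.mul_sum, ← Finset.mul_sum] at h1
    have h2 : v / 2 * ∑ i, (z k i - zstar i) ^ 2 ≤ 1 / (2 * v) * ∑ i, (x k i - m) ^ 2 := by
      linarith
    rw [← div_eq_inv_mul, le_div_iff₀ (by positivity)]
    rw [one_div, ← div_eq_inv_mul, le_div_iff₀ (by positivity)] at h2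
    have h3 := mul_le_mul_of_nonneg_left h2 hlam₂.le
    linarith
  rw [tendsto_pi_nhds]
  intro i
  have hsq : Filter.Tendsto (fun k => (z k i - zstar i) ^ 2) Filter.atTop (nhds 0) := by
    refine squeeze_zero (fun k => sq_nonneg _) (fun k => ?_)
      (by simpa using hQ.const_mul ((v ^ 2 * lam₂)⁻¹))
    exact (Finset.single_le_sum (f := fun i => (z k i - zstar i) ^ 2)
      (fun j _ => sq_nonneg _) (Finset.mem_univ i)).trans (herr k)
  have habs := hsq.sqrt
  simp only [Real.sqrt_sq_eq_abs, Real.sqrt_zero] at habs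
  exact tendsto_sub_nhds_zero_iff.1 ((tendsto_zero_iff_abs_tendsto_zero _).2 habs)
end

section
/- Let h_i : ℝ → ℝ be continuously differentiable and strictly convex, a ∈ ℝⁿ with a_i ∈ {−1,+1}, b ∈ ℝ, and H(z) = ∑_{i=1}^n h_i(z_i). Assume H attains its minimum over the feasible set {z : ∑_i a_i z_i = b} at a unique point z*. Let W be a symmetric nonnegative n×n weight matrix whose associated graph (edges where W_{ij} > 0) is connected, let η > 0, let g_l : ℝ → ℝ be continuous, odd, and strictly increasing, and let g_n : ℝ → ℝ be continuous, odd, and strictly sign-preserving (x·g_n(x) > 0 for x ≠ 0). If z : [0,∞) → ℝⁿ is a solution of ż_i(t) = η a_i ∑_{j=1}^n W_{ij} · g_n( g_l(a_j h_j'(z_j(t))) − g_l(a_i h_i'(z_i(t))) ) with feasible initialization ∑_i a_i z_i(0) = b, then z(t) converges to z* as t → ∞. -/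
/-!
The total cost `H = ∑ i, h i` is a strict Lyapunov function. Writing `φ i = a i * (h i)' (z i)`,
the symmetry of `W` and the oddness of `gn` give, along a solution,
`d/dt H(z) = -(η/2) ∑ i j, W i j (φ j - φ i) gn (gl (φ j) - gl (φ i))`,
and every summand is nonnegative because `gl` is increasing and `gn` preserves signs. The same
antisymmetry shows that `∑ i, a i * z i` is conserved, so the solution stays feasible.

The dissipation vanishes only if `φ` is constant across edges, hence (by connectedness) constant;
the gradient inequality for the convex `h i` then makes the point a constrained minimizer, which is
`zstar` by uniqueness (`eq_const_of_dissipation_zero`, `cost_le_of_equal_marginals`).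

Feasible sublevel sets of `H` are compact, since a convex function with a unique minimizer on a
closed affine set grows at least linearly away from it (`isBounded_sublevel`). A Lyapunov argument
on the compact sublevel set through `z 0` concludes (`tendsto_of_lyapunov`).
-/

open Filter Topology

/-- A function whose derivative is at most `-c` on `[0, ∞)` decreases at least at rate `c`. -/
lemma le_sub_mul_of_hasDerivAt {v v' : ℝ → ℝ} {c : ℝ}
    (hv : ∀ t, 0 ≤ t → HasDerivAt v (v' t) t) (hc : ∀ t, 0 ≤ t → v' t ≤ -c)
    {s t : ℝ} (hs : 0 ≤ s) (hst : s ≤ t) : v t ≤ v s - c * (t - s) := by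
  have hd : ∀ x, 0 ≤ x → HasDerivAt (fun x => v x + c * x) (v' x + c) x := fun x hx => by
    simpa using (hv x hx).fun_add ((hasDerivAt_id x).const_mul c)
  have hanti : AntitoneOn (fun x => v x + c * x) (Set.Ici 0) := by
    apply antitoneOn_of_deriv_nonpos (convex_Ici 0)
    · exact fun x hx => (hd x hx).continuousAt.continuousWithinAt
    · exact fun x hx => (hd x (interior_subset hx)).differentiableAt.differentiableWithinAt
    · intro x hx
      rw [(hd x (interior_subset hx)).deriv]
      linarith [hc x (interior_subset hx)]
  have := hanti (Set.mem_Ici.2 hs) (Set.mem_Ici.2 (hs.trans hst)) hst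
  simp only at this
  linarith

/-- Lyapunov's convergence criterion on a compact set `K` containing the trajectory: `V` is
dissipated at rate `D`, and both `D = 0` and `V ≤ V p` characterise the point `p` in `K`. -/
lemma tendsto_of_lyapunov {E : Type*} [TopologicalSpace E] {K : Set E}
    (hK : IsCompact K) {V D : E → ℝ} (hV : Continuous V) (hD : Continuous D)
    {z : ℝ → E} {p : E} (hzK : ∀ t, 0 ≤ t → z t ∈ K)
    (hder : ∀ t, 0 ≤ t → HasDerivAt (fun s => V (z s)) (-D (z t)) t)
    (hD0 : ∀ x ∈ K, 0 ≤ D x) (hDp : ∀ x ∈ K, D x = 0 → x = p)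
    (hVp : ∀ x ∈ K, V x ≤ V p → x = p) :
    Tendsto z atTop (𝓝 p) := by
  have hlow : ∀ ε > 0, ∃ T, 0 ≤ T ∧ V (z T) < V p + ε := by
    intro ε hε
    by_contra! hcon
    -- Otherwise the trajectory stays where `D` is bounded below, and `V` would tend to `-∞`.
    have hK' : IsCompact (K ∩ {x | V p + ε ≤ V x}) :=
      hK.inter_right (isClosed_le continuous_const hV)
    obtain ⟨x, hx, hmin⟩ := hK'.exists_isMinOn ⟨z 0, hzK 0 le_rfl, hcon 0 le_rfl⟩ hD.continuousOn
    have hpos : 0 < D x := by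
      refine lt_of_le_of_ne (hD0 x hx.1) fun h0 => ?_
      have h1 := hDp x hx.1 h0.symm
      have h2 : V p + ε ≤ V x := hx.2
      rw [h1] at h2
      linarith
    have hdec : ∀ t, 0 ≤ t → V (z t) ≤ V (z 0) - D x * (t - 0) := fun t ht =>
      le_sub_mul_of_hasDerivAt hder
        (fun s hs => neg_le_neg (hmin ⟨hzK s hs, hcon s hs⟩)) le_rfl ht
    have h0 := hcon 0 le_rfl
    have ht : 0 ≤ (V (z 0) - V p) / D x := div_nonneg (by linarith) hpos.le
    have h1 := hdec _ ht
    have h2 := hcon _ ht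
    rw [sub_zero, mul_div_cancel₀ _ hpos.ne'] at h1
    linarith
  rw [tendsto_nhds]
  intro U hU hpU
  rcases (K \ U).eq_empty_or_nonempty with hemp | hne
  · filter_upwards [eventually_ge_atTop 0] with t ht
    by_contra hn
    exact (hemp.subset ⟨hzK t ht, hn⟩ : z t ∈ (∅ : Set E))
  · obtain ⟨x, hx, hmin⟩ := (hK.diff hU).exists_isMinOn hne hV.continuousOn
    have hxp : V p < V x := by
      by_contra! hle
      exact hx.2 (hVp x hx.1 hle ▸ hpU)
    obtain ⟨T, hT, hVT⟩ := hlow (V x - V p) (by linarith)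
    filter_upwards [eventually_ge_atTop T] with t ht
    by_contra hn
    have h1 : V x ≤ V (z t) := hmin ⟨hzK t (hT.trans ht), hn⟩
    have h2 := le_sub_mul_of_hasDerivAt (c := 0) hder
      (fun s hs => by have := hD0 _ (hzK s hs); linarith) hT ht
    linarith

/-- A continuous convex function with a strict minimum at `p` on a closed convex set `S` has bounded
sublevel sets in `S`: its excess over the unit sphere around `p` propagates linearly along rays. -/
lemma isBounded_sublevel {E : Type*} [NormedAddCommGroup E] [NormedSpace ℝ E] [ProperSpace E]
    {S : Set E} (hS : IsClosed S) {V : E → ℝ} (hV : Continuous V) (hconv : ConvexOn ℝ S V)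
    {p : E} (hp : p ∈ S) (hmin : ∀ x ∈ S, V x ≤ V p → x = p) (c : ℝ) :
    Bornology.IsBounded (S ∩ {x | V x ≤ c}) := by
  -- Radial projection onto the unit sphere around `p`.
  have hproj : ∀ w ∈ S, 1 ≤ ‖w - p‖ → ∃ q ∈ S ∩ Metric.sphere p 1,
      ‖w - p‖ * (V q - V p) ≤ V w - V p := by
    intro w hw hr
    have hr0 : 0 < ‖w - p‖ := by linarith
    have hr1 : ‖w - p‖⁻¹ ≤ 1 := inv_le_one_of_one_le₀ hr
    have hri : 0 ≤ ‖w - p‖⁻¹ := inv_nonneg.2 hr0.le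
    refine ⟨(1 - ‖w - p‖⁻¹) • p + ‖w - p‖⁻¹ • w,
      ⟨hconv.1 hp hw (by linarith) hri (by ring), ?_⟩, ?_⟩
    · have : (1 - ‖w - p‖⁻¹) • p + ‖w - p‖⁻¹ • w - p = ‖w - p‖⁻¹ • (w - p) := by module
      rw [mem_sphere_iff_norm, this, norm_smul, norm_inv, norm_norm, inv_mul_cancel₀ hr0.ne']
    · have h1 := hconv.2 hp hw (by linarith : 0 ≤ 1 - ‖w - p‖⁻¹) hri (by ring)
      simp only [smul_eq_mul] at h1
      calc _ ≤ ‖w - p‖ * (‖w - p‖⁻¹ * (V w - V p)) := by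
            gcongr
            linarith
        _ = _ := by field_simp
  have hcomp : IsCompact (S ∩ Metric.sphere p 1) := (isCompact_sphere p 1).inter_left hS
  rcases (S ∩ Metric.sphere p 1).eq_empty_or_nonempty with hemp | hne
  · refine Metric.isBounded_closedBall.subset (t := Metric.closedBall p 1) fun w hw => ?_
    rw [mem_closedBall_iff_norm]
    by_contra! hlt
    obtain ⟨q, hq, -⟩ := hproj w hw.1 hlt.le
    exact hemp.subset hq
  · obtain ⟨q, hq, hqmin⟩ := hcomp.exists_isMinOn hne hV.continuousOn
    have hm : 0 < V q - V p := by
      by_contra! hle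
      have hqp := hmin q hq.1 (by linarith)
      have := hq.2
      simp [hqp] at this
    refine Metric.isBounded_closedBall.subset
      (t := Metric.closedBall p (max 1 ((c - V p) / (V q - V p)))) fun w hw => ?_
    rw [mem_closedBall_iff_norm, le_max_iff]
    by_cases hr : ‖w - p‖ ≤ 1
    · exact Or.inl hr
    · right
      obtain ⟨q', hq', hle⟩ := hproj w hw.1 (not_le.1 hr).le
      have h1 : V q ≤ V q' := hqmin hq'
      have h2 : V w ≤ c := hw.2
      rw [le_div_iff₀ hm]
      calc _ ≤ ‖w - p‖ * (V q' - V p) := by gcongr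
        _ ≤ _ := by linarith

/-- The gradient inequality for a differentiable convex function on the line. -/
lemma gradient_le {f : ℝ → ℝ} (hf : ConvexOn ℝ Set.univ f) (hd : Differentiable ℝ f) (x y : ℝ) :
    f x + deriv f x * (y - x) ≤ f y := by
  rcases lt_trichotomy x y with hlt | rfl | hlt
  · have := hf.deriv_le_slope (Set.mem_univ x) (Set.mem_univ y) hlt (hd x)
    rw [slope_def_field, le_div_iff₀ (by linarith)] at this
    linarith
  · simp
  · have := hf.slope_le_deriv (Set.mem_univ y) (Set.mem_univ x) hlt (hd x)
    rw [slope_def_field, div_le_iff₀ (by linarith)] at this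
    linarith

/-- A point at which all weighted marginal costs `a i * (h i)'` coincide minimizes the total cost
among the points with the same value of `∑ i, a i * w i`. -/
lemma cost_le_of_equal_marginals {n : ℕ} {h : Fin n → ℝ → ℝ}
    (hd : ∀ i, Differentiable ℝ (h i)) (hconv : ∀ i, ConvexOn ℝ Set.univ (h i))
    {a : Fin n → ℝ} (ha : ∀ i, a i * a i = 1) {x w : Fin n → ℝ} {c : ℝ}
    (hx : ∀ i, a i * deriv (h i) (x i) = c) (hw : ∑ i, a i * w i = ∑ i, a i * x i) :
    ∑ i, h i (x i) ≤ ∑ i, h i (w i) := by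
  have h1 : ∑ i, (h i (x i) + deriv (h i) (x i) * (w i - x i)) ≤ ∑ i, h i (w i) :=
    Finset.sum_le_sum fun i _ => gradient_le (hconv i) (hd i) _ _
  have h2 : ∑ i, deriv (h i) (x i) * (w i - x i) = 0 := by
    calc _ = ∑ i, c * (a i * w i - a i * x i) := Finset.sum_congr rfl fun i _ => by
            rw [← hx i]
            linear_combination (-deriv (h i) (x i) * (w i - x i)) * ha i
      _ = 0 := by rw [← Finset.mul_sum, Finset.sum_sub_distrib, hw, sub_self, mul_zero]
  rw [Finset.sum_add_distrib, h2, add_zero] at h1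
  exact h1

lemma edge_dissipation_pos {gl gn : ℝ → ℝ} (hgl : StrictMono gl)
    (hgn : ∀ x : ℝ, x ≠ 0 → 0 < x * gn x) {x y : ℝ} (hxy : x ≠ y) :
    0 < (y - x) * gn (gl y - gl x) := by
  rcases hxy.lt_or_gt with hlt | hlt
  · have h1 := sub_pos.2 (hgl hlt)
    exact mul_pos (sub_pos.2 hlt) ((mul_pos_iff_of_pos_left h1).1 (hgn _ h1.ne'))
  · have h1 := sub_neg.2 (hgl hlt)
    exact mul_pos_of_neg_of_neg (sub_neg.2 hlt) (neg_of_mul_pos_right (hgn _ h1.ne) h1.le)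

/-- The weighted double sum governing the decay of the total cost, as a function of the vector `φ`
of weighted marginal costs. -/
noncomputable def dissipation {n : ℕ} (W : Matrix (Fin n) (Fin n) ℝ) (gl gn : ℝ → ℝ)
    (φ : Fin n → ℝ) : ℝ :=
  ∑ i, ∑ j, W i j * ((φ j - φ i) * gn (gl (φ j) - gl (φ i)))

lemma edge_dissipation_nonneg {gl gn : ℝ → ℝ} (hgl : StrictMono gl)
    (hgn : ∀ x : ℝ, x ≠ 0 → 0 < x * gn x) (x y : ℝ) :
    0 ≤ (y - x) * gn (gl y - gl x) := by
  rcases eq_or_ne x y with rfl | hne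
  · simp
  · exact (edge_dissipation_pos hgl hgn hne).le

lemma eq_const_of_dissipation_zero {n : ℕ} {W : Matrix (Fin n) (Fin n) ℝ}
    (hW : ∀ i j, 0 ≤ W i j)
    (hconn : (SimpleGraph.fromRel fun i j : Fin n => 0 < W i j).Connected)
    {gl gn : ℝ → ℝ} (hgl : StrictMono gl) (hgn : ∀ x : ℝ, x ≠ 0 → 0 < x * gn x)
    {φ : Fin n → ℝ} (h0 : dissipation W gl gn φ = 0) (i j : Fin n) : φ i = φ j := by
  have hnn : ∀ i j, 0 ≤ W i j * ((φ j - φ i) * gn (gl (φ j) - gl (φ i))) := fun i j =>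
    mul_nonneg (hW i j) (edge_dissipation_nonneg hgl hgn _ _)
  have hterm : ∀ i j, 0 < W i j → φ i = φ j := by
    intro i j hij
    by_contra hne
    have h1 := (Finset.sum_eq_zero_iff_of_nonneg
      (fun i _ => Finset.sum_nonneg fun j _ => hnn i j)).1 h0 i (Finset.mem_univ i)
    have h2 := (Finset.sum_eq_zero_iff_of_nonneg (fun j _ => hnn i j)).1 h1 j (Finset.mem_univ j)
    exact (mul_pos hij (edge_dissipation_pos hgl hgn hne)).ne' h2
  obtain ⟨p⟩ := hconn.preconnected i j
  induction p with
  | nil => rfl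
  | cons hadj _ ih =>
    rw [SimpleGraph.fromRel_adj] at hadj
    rcases hadj.2 with h1 | h1
    · exact (hterm _ _ h1).trans ih
    · exact (hterm _ _ h1).symm.trans ih

/-- Summation by parts for an antisymmetric flow `F`. -/
lemma sum_mul_antisymm {n : ℕ} {F : Fin n → Fin n → ℝ} (hF : ∀ i j, F j i = -F i j)
    (φ : Fin n → ℝ) :
    ∑ i, φ i * ∑ j, F i j = -(1 / 2) * ∑ i, ∑ j, (φ j - φ i) * F i j := by
  have h1 : ∑ i, ∑ j, φ j * F i j = -∑ i, ∑ j, φ i * F i j := by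
    rw [Finset.sum_comm]
    simp only [← Finset.sum_neg_distrib]
    refine Finset.sum_congr rfl fun i _ => Finset.sum_congr rfl fun j _ => ?_
    rw [hF i j]
    ring
  simp only [sub_mul, Finset.sum_sub_distrib, Finset.mul_sum] at *
  rw [h1]
  ring

/-- Convergence of the continuous-time nonlinear Laplacian-gradient
dynamics to the unique constrained minimizer. With `h i` continuously differentiable and
strictly convex, `H(z) = ∑ i, h i (z i)` attaining its minimum over the feasible set
`{z | ∑ i, a i * z i = b}` uniquely at `z*`, `W` symmetric nonnegative with connected
associated graph (edges where `W i j > 0`), `η > 0`, `g_l` continuous odd strictly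
increasing, `g_n` continuous odd strictly sign-preserving, any solution of
`ż_i = η a_i ∑ j, W i j g_n(g_l(a_j (h j)'(z_j)) − g_l(a_i (h i)'(z_i)))` with feasible
initialization converges to `z*` as `t → ∞`. -/
theorem statement18 (n : ℕ)
    (h : Fin n → ℝ → ℝ)
    (hsmooth : ∀ i, ContDiff ℝ 1 (h i))
    (hconv : ∀ i, StrictConvexOn ℝ Set.univ (h i))
    (a : Fin n → ℝ) (ha : ∀ i, a i = 1 ∨ a i = -1) (b : ℝ)
    (zstar : Fin n → ℝ)
    (hzstar_feas : ∑ i, a i * zstar i = b)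
    (hzstar_min : ∀ w : Fin n → ℝ, ∑ i, a i * w i = b →
      ∑ i, h i (zstar i) ≤ ∑ i, h i (w i))
    (hzstar_uniq : ∀ w : Fin n → ℝ, ∑ i, a i * w i = b →
      (∀ w' : Fin n → ℝ, ∑ i, a i * w' i = b → ∑ i, h i (w i) ≤ ∑ i, h i (w' i)) →
      w = zstar)
    (W : Matrix (Fin n) (Fin n) ℝ)
    (hW_symm : ∀ i j, W i j = W j i) (hW_nonneg : ∀ i j, 0 ≤ W i j)
    (hconn : (SimpleGraph.fromRel fun i j : Fin n => 0 < W i j).Connected)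
    (η : ℝ) (hη : 0 < η)
    (gl gn : ℝ → ℝ)
    (hgl_cont : Continuous gl) (hgl_odd : ∀ x, gl (-x) = -gl x)
    (hgl_mono : StrictMono gl)
    (hgn_cont : Continuous gn) (hgn_odd : ∀ x, gn (-x) = -gn x)
    (hgn_sign : ∀ x : ℝ, x ≠ 0 → 0 < x * gn x)
    (z : ℝ → Fin n → ℝ)
    (hz : ∀ t : ℝ, 0 ≤ t → ∀ i, HasDerivAt (fun s => z s i)
      (η * a i * ∑ j, W i j *
        gn (gl (a j * deriv (h j) (z t j)) - gl (a i * deriv (h i) (z t i)))) t)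
    (hinit : ∑ i, a i * z 0 i = b) :
    Filter.Tendsto z Filter.atTop (nhds zstar) := by
  have ha2 : ∀ i, a i * a i = 1 := fun i => by rcases ha i with h | h <;> rw [h] <;> norm_num
  have hdiff : ∀ i, Differentiable ℝ (h i) := fun i => (hsmooth i).differentiable one_ne_zero
  have hdc : ∀ i, Continuous (deriv (h i)) := fun i => (hsmooth i).continuous_deriv le_rfl
  have hcvx : ∀ i, ConvexOn ℝ Set.univ (h i) := fun i => (hconv i).convexOn
  let φ : (Fin n → ℝ) → Fin n → ℝ := fun x i => a i * deriv (h i) (x i)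
  let F : (Fin n → ℝ) → Fin n → Fin n → ℝ := fun x i j => W i j * gn (gl (φ x j) - gl (φ x i))
  let V : (Fin n → ℝ) → ℝ := fun x => ∑ i, h i (x i)
  let D : (Fin n → ℝ) → ℝ := fun x => η / 2 * dissipation W gl gn (φ x)
  let S : Set (Fin n → ℝ) := {x | ∑ i, a i * x i = b}
  have hFanti : ∀ x i j, F x j i = -F x i j := by
    intro x i j
    simp only [F]
    rw [hW_symm j i, ← neg_sub (gl (φ x j)), hgn_odd, mul_neg]
  have hz' : ∀ t, 0 ≤ t → ∀ i, HasDerivAt (fun s => z s i) (η * a i * ∑ j, F (z t) i j) t := hz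
  have hφc : ∀ i, Continuous fun x => φ x i := fun i =>
    continuous_const.mul ((hdc i).comp (continuous_apply i))
  have hVc : Continuous V :=
    continuous_finsetSum _ fun i _ => (hdiff i).continuous.comp (continuous_apply i)
  have hDc : Continuous D := by
    refine continuous_const.mul (continuous_finsetSum _ fun i _ => continuous_finsetSum _
      fun j _ => continuous_const.mul (((hφc j).sub (hφc i)).mul (hgn_cont.comp ?_)))
    exact (hgl_cont.comp (hφc j)).sub (hgl_cont.comp (hφc i))
  have hSc : IsClosed S := isClosed_eq
    (continuous_finsetSum _ fun i _ => continuous_const.mul (continuous_apply i)) continuous_const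
  have hVder : ∀ t, 0 ≤ t → HasDerivAt (fun s => V (z s)) (-D (z t)) t := by
    intro t ht
    have h1 : HasDerivAt (fun s => ∑ i, h i (z s i))
        (∑ i, deriv (h i) (z t i) * (η * a i * ∑ j, F (z t) i j)) t :=
      HasDerivAt.fun_sum fun i _ => ((hdiff i) (z t i)).hasDerivAt.comp t (hz' t ht i)
    convert h1 using 1
    have h2 := sum_mul_antisymm (hFanti (z t)) (φ (z t))
    have h3 : ∑ i, ∑ j, (φ (z t) j - φ (z t) i) * F (z t) i j = dissipation W gl gn (φ (z t)) :=
      Finset.sum_congr rfl fun i _ => Finset.sum_congr rfl fun j _ => by simp only [F]; ring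
    calc -D (z t) = η * ∑ i, φ (z t) i * ∑ j, F (z t) i j := by rw [h2, h3]; simp only [D]; ring
      _ = _ := by
        rw [Finset.mul_sum]
        exact Finset.sum_congr rfl fun i _ => by simp only [φ]; ring
  have hfeas : ∀ t, 0 ≤ t → z t ∈ S := by
    have hd : ∀ t, 0 ≤ t → HasDerivAt (fun s => ∑ i, a i * z s i) 0 t := by
      intro t ht
      have h1 : HasDerivAt (fun s => ∑ i, a i * z s i)
          (∑ i, a i * (η * a i * ∑ j, F (z t) i j)) t :=
        HasDerivAt.fun_sum fun i _ => (hz' t ht i).const_mul (a i)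
      convert h1 using 1
      have h2 := sum_mul_antisymm (hFanti (z t)) (fun _ => η)
      simp only [sub_self, zero_mul, Finset.sum_const_zero, mul_zero] at h2
      rw [← h2]
      exact Finset.sum_congr rfl fun i _ => by
        linear_combination (-η * ∑ j, F (z t) i j) * ha2 i
    intro t ht
    have := constant_of_has_deriv_right_zero (a := 0) (b := t)
      (f := fun s => ∑ i, a i * z s i)
      (fun s hs => (hd s hs.1).continuousAt.continuousWithinAt)
      (fun s hs => (hd s hs.1).hasDerivWithinAt) t ⟨ht, le_rfl⟩
    exact this.trans hinit
  have hVp : ∀ x ∈ S, V x ≤ V zstar → x = zstar := fun x hx hle =>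
    hzstar_uniq x hx fun w hw => hle.trans (hzstar_min w hw)
  have hVconv : ConvexOn ℝ S V := by
    refine ⟨?_, ?_⟩
    · intro x hx y hy s t _ _ hst
      simp only [S, Set.mem_ofPred_eq, Pi.add_apply, Pi.smul_apply, smul_eq_mul] at *
      calc _ = s * ∑ i, a i * x i + t * ∑ i, a i * y i := by
            rw [Finset.mul_sum, Finset.mul_sum, ← Finset.sum_add_distrib]
            exact Finset.sum_congr rfl fun i _ => by ring
        _ = b := by rw [hx, hy, ← add_mul, hst, one_mul]
    · intro x _ y _ s t hs ht hst
      simp only [V, Finset.smul_sum, ← Finset.sum_add_distrib]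
      exact Finset.sum_le_sum fun i _ => (hcvx i).2 (Set.mem_univ _) (Set.mem_univ _) hs ht hst
  have hDnn : ∀ x, 0 ≤ D x := fun x => mul_nonneg (by positivity) <|
    Finset.sum_nonneg fun i _ => Finset.sum_nonneg fun j _ =>
      mul_nonneg (hW_nonneg i j) (edge_dissipation_nonneg hgl_mono hgn_sign _ _)
  have hK : IsCompact (S ∩ {x | V x ≤ V (z 0)}) :=
    Metric.isCompact_of_isClosed_isBounded (hSc.inter (isClosed_le hVc continuous_const))
      (isBounded_sublevel hSc hVc hVconv hzstar_feas hVp _)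
  refine tendsto_of_lyapunov hK hVc hDc (fun t ht => ⟨hfeas t ht, ?_⟩) hVder
    (fun x _ => hDnn x) (fun x hx h0 => ?_) fun x hx => hVp x hx.1
  · have := le_sub_mul_of_hasDerivAt (c := 0) hVder
      (fun s _ => by have := hDnn (z s); linarith) le_rfl ht
    simpa using this
  · have h0' : dissipation W gl gn (φ x) = 0 :=
      (mul_eq_zero.1 h0).resolve_left (by positivity)
    obtain ⟨i₀⟩ := hconn.nonempty
    refine hzstar_uniq x hx.1 fun w hw => cost_le_of_equal_marginals hdiff hcvx ha2
      (c := φ x i₀) (fun i => ?_) (hw.trans (Eq.symm hx.1))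
    exact eq_const_of_dissipation_zero hW_nonneg hconn hgl_mono hgn_sign h0' i i₀
end
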